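/- arXiv:2002.00852 — 7 statements merged into one kernel-verified Lean document; each statement's English description precedes it below -/
import Mathlib

section
/- Let M be a convex subset of ℝ^p, Z a set, and ℓ : M × Z → ℝ a loss such that for some β > 0 and every z ∈ Z the function m ↦ e^{−β ℓ(m,z)} is concave on M. Let π be a prior probability measure on a measurable expert set Θ, let the expert predictions θ ↦ m_{θ,t} ∈ M be measurable and π_t-integrable, and let the forecaster predict m̂_t = ∫_Θ m_{θ,t} dπ_t(θ) with the exponential-weights posterior π_t. Then for every T ≥ 1, uniformly over the outcome sequence and the expert advice, L̂_T ≤ inf_q { ∫_Θ L_{θ,T} dq(θ) + D(q‖π)/β }, where the infimum runs over all probability measures q on Θ. -/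
/-!
The proof combines two facts about the normalising constants `W t = ∫ exp (-β L_{θ,t}) dπ(θ)`.

* The ratio `W (t + 1) / W t` is the posterior mean of `exp (-β ℓ(m_{θ,t}, z_t))`, so Jensen's
  inequality bounds it by `exp (-β ℓ(m̂_t, z_t))`. As `W 0 = 1`, telescoping gives
  `log (W T) ≤ -β L̂_T`.
* The Donsker–Varadhan inequality gives `-β ∫ L_{θ,T} dq ≤ D(q ‖ π) + log (W T)`.

The convex set `M` need not be closed and a concave function on it may be discontinuous at
boundary points, so Mathlib's Jensen inequality, which assumes a closed set and continuity, does
not apply. In finite dimension neither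
assumption is needed: the mean of a random vector with values in a convex set
always belongs to that set (`integral_mem_of_convex`), and Jensen's inequality follows by applying
this to the hypograph (`jensen_concave`).
-/

open MeasureTheory ProbabilityTheory Real

set_option autoImplicit false

noncomputable section

/-- A (constant-speed) geodesic parametrized by `[0,1]`:
`d(γ(s),γ(t)) = (t−s)·d(γ(0),γ(1))` for all `0 ≤ s ≤ t ≤ 1`. -/
def IsGeodesic {M : Type*} [MetricSpace M] (γ : ℝ → M) : Prop :=
  ∀ s t : ℝ, 0 ≤ s → s ≤ t → t ≤ 1 →
    dist (γ s) (γ t) = (t - s) * dist (γ 0) (γ 1)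

/-- A metric space is geodesic if every pair of points is joined by a geodesic. -/
def GeodesicSpace (M : Type*) [MetricSpace M] : Prop :=
  ∀ x y : M, ∃ γ : ℝ → M, IsGeodesic γ ∧ γ 0 = x ∧ γ 1 = y

/-- `f` is geodesically convex if `f ∘ γ` is convex on `[0,1]` for every geodesic `γ`. -/
def GeodesicallyConvex {M : Type*} [MetricSpace M] (f : M → ℝ) : Prop :=
  ∀ γ : ℝ → M, IsGeodesic γ → ConvexOn ℝ (Set.Icc (0 : ℝ) 1) (f ∘ γ)

/-- `f` is geodesically concave if `−f` is geodesically convex. -/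
def GeodesicallyConcave {M : Type*} [MetricSpace M] (f : M → ℝ) : Prop :=
  GeodesicallyConvex (fun x => -f x)

/-- `f` is geodesically `α`-convex if along every geodesic `γ` the function
`t ↦ f(γ(t)) − (α/2)·d(γ(0),γ(1))²·t²` is convex on `[0,1]`. -/
def GeodesicallyAlphaConvex {M : Type*} [MetricSpace M] (α : ℝ) (f : M → ℝ) : Prop :=
  ∀ γ : ℝ → M, IsGeodesic γ →
    ConvexOn ℝ (Set.Icc (0 : ℝ) 1)
      (fun t => f (γ t) - α / 2 * dist (γ 0) (γ 1) ^ 2 * t ^ 2)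

/-- Non-positive curvature comparison inequality for a geodesic space. -/
def NPCSpace (M : Type*) [MetricSpace M] : Prop :=
  GeodesicSpace M ∧
    ∀ (p : M) (γ : ℝ → M), IsGeodesic γ → ∀ t ∈ Set.Icc (0 : ℝ) 1,
      dist p (γ t) ^ 2 ≤
        (1 - t) * dist p (γ 0) ^ 2 + t * dist p (γ 1) ^ 2
          - t * (1 - t) * dist (γ 0) (γ 1) ^ 2

/-- `x` is a barycenter of `P`: it minimizes `y ↦ ∫ d(y,·)² dP`. -/
def IsBarycenter {M : Type*} [MetricSpace M] [MeasurableSpace M]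
    (P : Measure M) (x : M) : Prop :=
  ∀ y : M, ∫ z, dist x z ^ 2 ∂P ≤ ∫ z, dist y z ^ 2 ∂P

/-- Kullback–Leibler divergence `∫ ln(dq/dprior) dq` (as a real number; it is only
meaningful when `q ≪ prior` and the integrand is `q`-integrable, which is assumed
wherever it is used below). -/
def KLdiv {Θ : Type*} [MeasurableSpace Θ] (q prior : Measure Θ) : ℝ :=
  ∫ θ, Real.log ((q.rnDeriv prior θ).toReal) ∂q

/-- Weak separation of a point from a nonempty convex set in finite dimension, with no closedness
assumption. If the set has empty interior it lies in a proper affine subspace, and a functional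
vanishing on the direction of that subspace is constant on the set. -/
theorem exists_dual_ne_zero_le_of_notMem {E : Type*} [NormedAddCommGroup E] [NormedSpace ℝ E]
    [FiniteDimensional ℝ E] {s : Set E} (hs : Convex ℝ s) (hne : s.Nonempty) {x : E}
    (hx : x ∉ s) : ∃ g : E →ₗ[ℝ] ℝ, g ≠ 0 ∧ ∀ y ∈ s, g y ≤ g x := by
  by_cases hint : (interior s).Nonempty
  · obtain ⟨f, hf, hle⟩ := geometric_hahn_banach_of_nonempty_interior_point hs
      (fun h => hx (interior_subset h)) hint
    exact ⟨f.toLinearMap, fun h => hf (by ext y; exact LinearMap.congr_fun h y), hle⟩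
  · rw [hs.interior_nonempty_iff_affineSpan_eq_top] at hint
    have hdir : (affineSpan ℝ s).direction < ⊤ := by
      rw [lt_top_iff_ne_top, Ne, AffineSubspace.direction_eq_top_iff_of_nonempty
        ((affineSpan_nonempty ℝ).2 hne)]
      exact hint
    obtain ⟨g, hg0, hg⟩ := Submodule.exists_le_ker_of_lt_top _ hdir
    obtain ⟨a, ha⟩ := hne
    have hconst : ∀ y ∈ s, g y = g a := fun y hy => by
      have hmem := hg (AffineSubspace.vsub_mem_direction (subset_affineSpan ℝ s hy)
        (subset_affineSpan ℝ s ha))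
      rw [LinearMap.mem_ker, vsub_eq_sub, map_sub] at hmem
      linarith
    rcases le_total (g a) (g x) with h | h
    · exact ⟨g, hg0, fun y hy => (hconst y hy).le.trans h⟩
    · exact ⟨-g, neg_ne_zero.2 hg0, fun y hy => by
        simpa [hconst y hy] using h⟩

/-- In finite dimension the mean of a random vector with values in a convex set belongs to that
set, even if the set is not closed. Let `V` be a smallest subspace with `X - 𝔼 X ∈ V` almost
surely. A functional on `V` separating the mean from the set would vanish almost surely on
`X - 𝔼 X`, which would then live in a smaller subspace. -/
theorem integral_mem_of_convex {Ω E : Type*} [MeasurableSpace Ω] [NormedAddCommGroup E]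
    [NormedSpace ℝ E] [FiniteDimensional ℝ E] {μ : Measure Ω} [IsProbabilityMeasure μ]
    {s : Set E} (hs : Convex ℝ s) {X : Ω → E} (hX : ∀ ω, X ω ∈ s) (hXi : Integrable X μ) :
    ∫ ω, X ω ∂μ ∈ s := by
  set c := ∫ ω, X ω ∂μ with hc
  by_contra hcs
  have key : ∀ (n : ℕ) (V : Submodule ℝ E), Module.finrank ℝ V = n →
      (∀ᵐ ω ∂μ, X ω - c ∈ V) → False := by
    intro n
    induction n using Nat.strong_induction_on with
    | _ n ih =>
      intro V hV hXV
      have hconv : Convex ℝ {v : V | c + (v : E) ∈ s} := by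
        intro v hv w hw a b ha hb hab
        have hcomb := hs hv hw ha hb hab
        have heq : c + ((a • v + b • w : V) : E)
            = a • (c + (v : E)) + b • (c + (w : E)) := by
          have : c = (a + b) • c := by rw [hab, one_smul]
          nth_rewrite 1 [this]
          simp only [Submodule.coe_add, Submodule.coe_smul]
          module
        show c + ((a • v + b • w : V) : E) ∈ s
        rw [heq]
        exact hcomb
      have hne : {v : V | c + (v : E) ∈ s}.Nonempty := by
        obtain ⟨ω, hω⟩ := hXV.exists
        exact ⟨⟨X ω - c, hω⟩, by simpa using hX ω⟩
      obtain ⟨g, hg0, hg⟩ := exists_dual_ne_zero_le_of_notMem hconv hne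
        (x := 0) (by simpa using hcs)
      obtain ⟨G, hG⟩ := LinearMap.exists_extend g
      have hGv : ∀ v : V, G v = g v := fun v => LinearMap.congr_fun hG v
      have hle : ∀ᵐ ω ∂μ, 0 ≤ -(G (X ω - c)) := by
        filter_upwards [hXV] with ω hω
        have h := hg ⟨X ω - c, hω⟩ (by simpa using hX ω)
        rw [← hGv, map_zero] at h
        simpa using h
      have hi : Integrable (fun ω => X ω - c) μ := hXi.sub (integrable_const c)
      have hGi : Integrable (fun ω => G (X ω - c)) μ :=
        (LinearMap.toContinuousLinearMap G).integrable_comp hi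
      have hzero : ∫ ω, -(G (X ω - c)) ∂μ = 0 := by
        have h := (LinearMap.toContinuousLinearMap G).integral_comp_comm hi
        have h0 : ∫ ω, (X ω - c) ∂μ = 0 := by
          rw [integral_sub hXi (integrable_const c)]
          simp [hc]
        rw [h0, map_zero] at h
        rw [integral_neg, neg_eq_zero]
        exact h
      have hae := (integral_eq_zero_iff_of_nonneg_ae hle hGi.neg).1 hzero
      have hlt : V ⊓ LinearMap.ker G < V := by
        refine lt_of_le_of_ne inf_le_left fun h => hg0 ?_
        ext v
        rw [← hGv]
        exact (inf_eq_left.1 h) v.2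
      refine ih _ (hV ▸ Submodule.finrank_lt_finrank_of_lt hlt) (V ⊓ LinearMap.ker G) rfl ?_
      filter_upwards [hXV, hae] with ω h1 h2
      exact ⟨h1, neg_eq_zero.1 h2⟩
  exact key _ ⊤ rfl (by simp)

/-- Jensen's inequality for a concave function on a convex subset of a finite-dimensional space,
without closedness of the set or semicontinuity of the function: apply `integral_mem_of_convex`
to the hypograph. -/
theorem jensen_concave {Ω E : Type*} [MeasurableSpace Ω] [NormedAddCommGroup E]
    [NormedSpace ℝ E] [FiniteDimensional ℝ E] {μ : Measure Ω} [IsProbabilityMeasure μ]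
    {s : Set E} {f : E → ℝ} (hf : ConcaveOn ℝ s f) {X : Ω → E} (hX : ∀ ω, X ω ∈ s)
    (hXi : Integrable X μ) (hfi : Integrable (fun ω => f (X ω)) μ) :
    ∫ ω, f (X ω) ∂μ ≤ f (∫ ω, X ω ∂μ) := by
  have h := integral_mem_of_convex (μ := μ) hf.convex_hypograph
    (X := fun ω => (X ω, f (X ω))) (fun ω => ⟨hX ω, le_rfl⟩) (hXi.prodMk hfi)
  rw [integral_pair hXi hfi] at h
  exact h.2

/-- Donsker–Varadhan inequality: Gibbs' inequality `0 ≤ D(q ‖ ν)` for the exponential tilting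
`ν` of `μ` by `f`. -/
theorem integral_le_llr_add_log {Ω : Type*} [MeasurableSpace Ω] {μ q : Measure Ω}
    [IsProbabilityMeasure μ] [IsProbabilityMeasure q] (hq : q ≪ μ) {f : Ω → ℝ}
    (hfq : Integrable f q) (hfμ : Integrable (fun ω => Real.exp (f ω)) μ)
    (hqi : Integrable (llr q μ) q) :
    ∫ ω, f ω ∂q ≤ ∫ ω, llr q μ ω ∂q + Real.log (∫ ω, Real.exp (f ω) ∂μ) := by
  have := isProbabilityMeasure_tilted hfμ
  have h := InformationTheory.integral_llr_add_sub_measure_univ_nonneg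
    (hq.trans (absolutelyContinuous_tilted hfμ)) (integrable_llr_tilted_right hq hfq hqi hfμ)
  rw [integral_llr_tilted_right hq hfq hfμ hqi] at h
  simp only [probReal_univ] at h
  linarith

/-- PAC-Bayes bound for the exponentially weighted average forecaster on a convex
subset `M ⊆ ℝ^p`: if `m ↦ e^{−βℓ(m,z)}` is concave on `M` for every outcome `z`,
and `mhat_t = ∫ m_{θ,t} dπ_t(θ)` with the exponential-weights posterior `π_t`, then
for every `T ≥ 1` and every probability measure `q ≪ π` on `Θ`,
`L̂_T ≤ ∫ L_{θ,T} dq(θ) + D(q‖π)/β` (times are indexed by `0,…,T−1`). -/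
theorem stmt_0 {p : ℕ} {Z : Type*} {Θ : Type*} [MeasurableSpace Θ]
    (M : Set (EuclideanSpace ℝ (Fin p))) (hM : Convex ℝ M)
    (ℓ : EuclideanSpace ℝ (Fin p) → Z → ℝ) (β : ℝ) (hβ : 0 < β)
    (hconc : ∀ z : Z, ConcaveOn ℝ M fun m => Real.exp (-β * ℓ m z))
    (prior : Measure Θ) [IsProbabilityMeasure prior]
    (z : ℕ → Z) (m : Θ → ℕ → EuclideanSpace ℝ (Fin p))
    (hmM : ∀ θ t, m θ t ∈ M)
    (hmeas : ∀ t, Measurable fun θ => m θ t)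
    (L : Θ → ℕ → ℝ)
    (hL : ∀ θ t, L θ t = ∑ s ∈ Finset.range t, ℓ (m θ s) (z s))
    (hLmeas : ∀ t, Measurable fun θ => L θ t)
    (hInt1 : ∀ t, Integrable (fun θ => Real.exp (-β * L θ t)) prior)
    (hInt2 : ∀ t, Integrable (fun θ => Real.exp (-β * L θ t) • m θ t) prior)
    (mhat : ℕ → EuclideanSpace ℝ (Fin p))
    (hmhat : ∀ t, mhat t = (∫ θ, Real.exp (-β * L θ t) ∂prior)⁻¹ •
        ∫ θ, Real.exp (-β * L θ t) • m θ t ∂prior)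
    (T : ℕ) (hT : 1 ≤ T)
    (q : Measure Θ) [IsProbabilityMeasure q] (hq : q ≪ prior)
    (hqInt : Integrable (fun θ => L θ T) q)
    (hqKL : Integrable (fun θ => Real.log ((q.rnDeriv prior θ).toReal)) q) :
    ∑ t ∈ Finset.range T, ℓ (mhat t) (z t) ≤ (∫ θ, L θ T ∂q) + KLdiv q prior / β := by
  -- `W t` is the normalising constant of the posterior at time `t`.
  set W : ℕ → ℝ := fun t => ∫ θ, Real.exp (-β * L θ t) ∂prior with hW
  have hWpos : ∀ t, 0 < W t := fun t => integral_exp_pos (hInt1 t)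
  have hexp : ∀ θ t, Real.exp (-β * L θ t) * Real.exp (-β * ℓ (m θ t) (z t))
      = Real.exp (-β * L θ (t + 1)) := fun θ t => by
    rw [← Real.exp_add, hL θ (t + 1), Finset.sum_range_succ, ← hL θ t]
    ring_nf
  -- One round: Jensen's inequality under the posterior `prior.tilted (-β * L · t)`.
  have hstep : ∀ t, W (t + 1) ≤ W t * Real.exp (-β * ℓ (mhat t) (z t)) := by
    intro t
    have hprob := isProbabilityMeasure_tilted (hInt1 t)
    have hXi : Integrable (fun θ => m θ t) (prior.tilted fun θ => -β * L θ t) :=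
      (integrable_tilted_iff (hInt1 t) _).2 (hInt2 t)
    have hfi : Integrable (fun θ => Real.exp (-β * ℓ (m θ t) (z t)))
        (prior.tilted fun θ => -β * L θ t) := by
      refine (integrable_tilted_iff (hInt1 t) _).2 ?_
      simp only [smul_eq_mul, hexp]
      exact hInt1 (t + 1)
    have hmean : ∫ θ, m θ t ∂(prior.tilted fun θ => -β * L θ t) = mhat t := by
      rw [integral_tilted, hmhat t, ← integral_smul]
      simp only [smul_smul, div_eq_inv_mul]
    have hval : ∫ θ, Real.exp (-β * ℓ (m θ t) (z t)) ∂(prior.tilted fun θ => -β * L θ t)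
        = W (t + 1) / W t := by
      rw [integral_tilted, div_eq_inv_mul, hW, ← integral_const_mul]
      congr 1
      ext θ
      rw [← hexp θ t, smul_eq_mul]
      ring
    have hJ := jensen_concave (hconc (z t)) (fun θ => hmM θ t) hXi hfi
    rw [hmean, hval, div_le_iff₀ (hWpos t)] at hJ
    linarith
  have hlog : ∀ t, Real.log (W t) ≤ -β * ∑ s ∈ Finset.range t, ℓ (mhat s) (z s) := by
    intro t
    induction t with
    | zero => simp [hW, hL]
    | succ t ih =>
      have h := Real.log_le_log (hWpos (t + 1)) (hstep t)
      rw [Real.log_mul (hWpos t).ne' (Real.exp_pos _).ne', Real.log_exp] at h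
      rw [Finset.sum_range_succ]
      linarith
  have hDV := integral_le_llr_add_log hq (hqInt.const_mul (-β)) (hInt1 T) hqKL
  rw [integral_const_mul] at hDV
  have hKL : KLdiv q prior = ∫ θ, llr q prior θ ∂q := rfl
  have hT' : Real.log (∫ θ, Real.exp (-β * L θ T) ∂prior)
      ≤ -β * ∑ s ∈ Finset.range T, ℓ (mhat s) (z s) := hlog T
  rw [← sub_le_iff_le_add', le_div_iff₀ hβ, hKL]
  linarith
end
end

section
/- Let (M,d) be a complete geodesic metric space and f : M → ℝ. If f is geodesically α-convex and L-Lipschitz for some α, L > 0, then for every β with 0 ≤ β ≤ α/L² the function e^{−β f} is geodesically concave. -/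
/-!
Along a geodesic of length `D`, the function `g = f ∘ γ` satisfies the midpoint inequality
`g ((x + y) / 2) ≤ (g x + g y) / 2 - α D² (x - y)² / 8` and is `L D`-Lipschitz.
Since `β L² ≤ α`, the gain `β α D² (x - y)² / 8` is at least `v² / 2`, where
`v = β (g x - g y) / 2`, and the bound `cosh v ≤ exp (v² / 2)` yields midpoint
concavity of `exp (-β g)` (`exp_midpoint`). Being continuous, `exp (-β g)` is then concave
(`convexOn_of_midpoint`). Working at midpoints is essential: at other convex weights `λ` the
two-point data alone do not give the inequality, as `log (1 - λ + λ exp (-v)) + λ v` may exceed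
`λ (1 - λ) v² / 2`.
-/

open MeasureTheory ProbabilityTheory Real

set_option autoImplicit false

noncomputable section

/-- A continuous midpoint-convex function on `[0,1]` is convex. -/
lemma convexOn_of_midpoint {F : ℝ → ℝ} (hc : ContinuousOn F (Set.Icc 0 1))
    (hm : ∀ x ∈ Set.Icc (0 : ℝ) 1, ∀ y ∈ Set.Icc (0 : ℝ) 1,
      F ((x + y) / 2) ≤ (F x + F y) / 2) :
    ConvexOn ℝ (Set.Icc (0 : ℝ) 1) F := by
  refine ⟨convex_Icc 0 1, ?_⟩
  intro x hx y hy a b ha hb hab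
  have hmem : ∀ t ∈ Set.Icc (0 : ℝ) 1, (1 - t) * x + t * y ∈ Set.Icc (0 : ℝ) 1 := by
    intro t ht
    exact convex_Icc (0 : ℝ) 1 hx hy (by linarith [ht.2]) ht.1 (by ring)
  -- The excess of `F` over its chord; its maximum on `[0,1]` must be nonpositive.
  set k : ℝ → ℝ := fun t => F ((1 - t) * x + t * y) - ((1 - t) * F x + t * F y) with hk
  have hkc : ContinuousOn k (Set.Icc 0 1) := by
    apply ContinuousOn.sub
    · exact hc.comp (by fun_prop) hmem
    · fun_prop
  have hkm : ∀ s ∈ Set.Icc (0 : ℝ) 1, ∀ t ∈ Set.Icc (0 : ℝ) 1,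
      k ((s + t) / 2) ≤ (k s + k t) / 2 := by
    intro s hs t ht
    have h := hm _ (hmem s hs) _ (hmem t ht)
    have e : ((1 - s) * x + s * y + ((1 - t) * x + t * y)) / 2
        = (1 - (s + t) / 2) * x + (s + t) / 2 * y := by ring
    rw [e] at h
    simp only [hk]
    linarith
  have hk0 : k 0 = 0 := by simp [hk]
  have hk1 : k 1 = 0 := by simp [hk]
  obtain ⟨m, hmI, hmax⟩ := isCompact_Icc.exists_isMaxOn (Set.nonempty_Icc.2 zero_le_one) hkc
  -- `m` is the midpoint of its nearest endpoint, where `k = 0`, and a point where `k ≤ k m`;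
  -- hence `k m ≤ k m / 2`.
  have hm0 : k m ≤ 0 := by
    rcases le_total m (1 / 2) with h | h
    · have hI : 2 * m ∈ Set.Icc (0 : ℝ) 1 := ⟨by linarith [hmI.1], by linarith⟩
      have h1 := hkm 0 (by simp) (2 * m) hI
      have h2 : k (2 * m) ≤ k m := hmax hI
      rw [show (0 + 2 * m) / 2 = m by ring] at h1
      linarith
    · have hI : 2 * m - 1 ∈ Set.Icc (0 : ℝ) 1 := ⟨by linarith, by linarith [hmI.2]⟩
      have h1 := hkm 1 (by simp) (2 * m - 1) hI
      have h2 : k (2 * m - 1) ≤ k m := hmax hI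
      rw [show (1 + (2 * m - 1)) / 2 = m by ring] at h1
      linarith
  have hb1 : k b ≤ k m := hmax (show b ∈ Set.Icc (0 : ℝ) 1 from ⟨hb, by linarith⟩)
  have ha' : a = 1 - b := by linarith
  subst ha'
  simp only [hk, smul_eq_mul] at *
  linarith

/-- Two-point inequality: a gain of `(u - v)² / 8` in the midpoint inequality for the exponent
makes the exponential midpoint-concave. -/
lemma exp_midpoint {u v w : ℝ} (h : (u + v) / 2 + (u - v) ^ 2 / 8 ≤ w) :
    (Real.exp u + Real.exp v) / 2 ≤ Real.exp w := by
  have h1 : (Real.exp u + Real.exp v) / 2 = Real.exp ((u + v) / 2) * Real.cosh ((u - v) / 2) := by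
    rw [Real.cosh_eq, mul_div_assoc', mul_add, ← Real.exp_add, ← Real.exp_add]
    ring_nf
  rw [h1]
  calc Real.exp ((u + v) / 2) * Real.cosh ((u - v) / 2)
      ≤ Real.exp ((u + v) / 2) * Real.exp (((u - v) / 2) ^ 2 / 2) := by
        gcongr
        exact Real.cosh_le_exp_half_sq _
    _ = Real.exp ((u + v) / 2 + (u - v) ^ 2 / 8) := by
        rw [← Real.exp_add]
        ring_nf
    _ ≤ Real.exp w := Real.exp_le_exp.2 h

/-- If `f` is geodesically `α`-convex and `L`-Lipschitz on a complete geodesic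
space, then `e^{−βf}` is geodesically concave for `0 ≤ β ≤ α/L²`. -/
theorem stmt_3 {M : Type*} [MetricSpace M] [CompleteSpace M]
    (hgeo : GeodesicSpace M) (f : M → ℝ) (α L : ℝ) (hα : 0 < α) (hLpos : 0 < L)
    (hconv : GeodesicallyAlphaConvex α f)
    (hlip : ∀ x y : M, |f x - f y| ≤ L * dist x y)
    (β : ℝ) (hβ0 : 0 ≤ β) (hβ : β ≤ α / L ^ 2) :
    GeodesicallyConcave fun x => Real.exp (-β * f x) := by
  intro γ hγ
  set D := dist (γ 0) (γ 1) with hD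
  have hlipγ : ∀ x ∈ Set.Icc (0 : ℝ) 1, ∀ y ∈ Set.Icc (0 : ℝ) 1,
      |f (γ x) - f (γ y)| ≤ L * D * |x - y| := by
    intro x hx y hy
    refine (hlip _ _).trans (le_of_eq ?_)
    rcases le_total x y with h | h
    · rw [hγ x y hx.1 h hy.2, abs_sub_comm, abs_of_nonneg (sub_nonneg.2 h)]
      ring
    · rw [dist_comm, hγ y x hy.1 h hx.2, abs_of_nonneg (sub_nonneg.2 h)]
      ring
  have hLD : 0 ≤ L * D := mul_nonneg hLpos.le dist_nonneg
  have hcont : ContinuousOn (fun t => f (γ t)) (Set.Icc 0 1) := by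
    apply LipschitzOnWith.continuousOn (K := (L * D).toNNReal)
    apply LipschitzOnWith.of_dist_le_mul
    intro x hx y hy
    rw [Real.coe_toNNReal _ hLD, Real.dist_eq, Real.dist_eq]
    exact hlipγ x hx y hy
  have hβL : β * L ^ 2 ≤ α := (le_div_iff₀ (by positivity)).1 hβ
  apply convexOn_of_midpoint
  · exact ((hcont.const_mul (-β)).rexp).neg
  · intro x hx y hy
    have hmid := (hconv γ hγ).2 hx hy
      (by norm_num : (0 : ℝ) ≤ 1 / 2) (by norm_num : (0 : ℝ) ≤ 1 / 2) (by norm_num)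
    simp only [smul_eq_mul, ← hD] at hmid
    rw [show 1 / 2 * x + 1 / 2 * y = (x + y) / 2 by ring] at hmid
    have hsq : (f (γ x) - f (γ y)) ^ 2 ≤ L ^ 2 * (D * (x - y)) ^ 2 := by
      have h := pow_le_pow_left₀ (abs_nonneg _) (hlipγ x hx y hy) 2
      rw [sq_abs, mul_pow, sq_abs] at h
      linarith
    have hgain : β * (f (γ x) - f (γ y)) ^ 2 ≤ α * (D * (x - y)) ^ 2 :=
      calc β * (f (γ x) - f (γ y)) ^ 2 ≤ β * (L ^ 2 * (D * (x - y)) ^ 2) := by gcongr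
        _ = β * L ^ 2 * (D * (x - y)) ^ 2 := by ring
        _ ≤ α * (D * (x - y)) ^ 2 := by gcongr
    have hfm : f (γ ((x + y) / 2)) ≤
        (f (γ x) + f (γ y)) / 2 - β * (f (γ x) - f (γ y)) ^ 2 / 8 := by
      linarith
    have hexp := exp_midpoint (u := -β * f (γ x)) (v := -β * f (γ y))
      (w := -β * f (γ ((x + y) / 2))) (by
        have h := mul_le_mul_of_nonneg_left hfm hβ0
        linarith)
    simp only [Function.comp_apply]
    linarith
end
end

section
/- Let (M,d) be a geodesic metric space, let f : M → ℝ be geodesically α-convex and L-Lipschitz for some α, L > 0, and let 0 ≤ β ≤ α/L². Then for every geodesic γ : [0,1] → M, writing x = γ(0), y = γ(1) and z = γ(1/2), one has (1/2)·e^{β(f(z)−f(x))} + (1/2)·e^{β(f(z)−f(y))} ≤ 1. -/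
/-!
Write `D` for the distance between the endpoints `x`, `y` and `z` for the midpoint. Strong convexity
at `t = 1/2` gives `2 f(z) - f(x) - f(y) ≤ -α D² / 4`, and the Lipschitz bound gives
`(f(y) - f(x))² ≤ L² D²`. The average of the two exponentials is `exp m * cosh u`, where `m` and `u`
are the half-sum and half-difference of the exponents; since `cosh u ≤ exp (u² / 2)`, it suffices that
`m + u² / 2 ≤ 0`. The two bounds give `m + u² / 2 ≤ β D² (β L² - α) / 8`, which is nonpositive as
`β L² ≤ α`.
-/

open MeasureTheory ProbabilityTheory Real

set_option autoImplicit false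

noncomputable section

/-- Midpoint form of `α`-convexity. The constant is `α/2 * (1/2 - 1/4) = α/8`. -/
theorem GeodesicallyAlphaConvex.midpoint_le {M : Type*} [MetricSpace M] {α : ℝ} {f : M → ℝ}
    (hconv : GeodesicallyAlphaConvex α f) {γ : ℝ → M} (hγ : IsGeodesic γ) :
    f (γ (1 / 2)) ≤ (f (γ 0) + f (γ 1)) / 2 - α / 8 * dist (γ 0) (γ 1) ^ 2 := by
  have h := (hconv γ hγ).2 (Set.left_mem_Icc.2 zero_le_one) (Set.right_mem_Icc.2 zero_le_one)
    (one_half_pos (α := ℝ)).le one_half_pos.le (add_halves 1)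
  simp only [smul_eq_mul, mul_zero, mul_one, zero_add] at h
  linarith

/-- A two-point sub-Gaussian bound: the mean of `exp p` and `exp q` is at most the exponential of
the mean of `p` and `q` plus half their variance. -/
theorem half_exp_add_half_exp_le (p q : ℝ) :
    (1 / 2) * Real.exp p + (1 / 2) * Real.exp q
      ≤ Real.exp ((p + q) / 2 + ((p - q) / 2) ^ 2 / 2) := by
  have hp : Real.exp p = Real.exp ((p + q) / 2) * Real.exp ((p - q) / 2) := by
    rw [← Real.exp_add]; ring_nf
  have hq : Real.exp q = Real.exp ((p + q) / 2) * Real.exp (-((p - q) / 2)) := by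
    rw [← Real.exp_add]; ring_nf
  calc (1 / 2) * Real.exp p + (1 / 2) * Real.exp q
      = Real.exp ((p + q) / 2) * Real.cosh ((p - q) / 2) := by
        rw [Real.cosh_eq, hp, hq]; ring
    _ ≤ Real.exp ((p + q) / 2) * Real.exp (((p - q) / 2) ^ 2 / 2) := by
        gcongr
        exact Real.cosh_le_exp_half_sq _
    _ = _ := (Real.exp_add _ _).symm

/-- Midpoint inequality: for `f` geodesically `α`-convex and `L`-Lipschitz and
`0 ≤ β ≤ α/L²`, along any geodesic `γ` with `x = γ(0)`, `y = γ(1)`, `z = γ(1/2)`,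
`(1/2)·e^{β(f(z)−f(x))} + (1/2)·e^{β(f(z)−f(y))} ≤ 1`. -/
theorem stmt_4 {M : Type*} [MetricSpace M]
    (hgeo : GeodesicSpace M) (f : M → ℝ) (α L : ℝ) (hα : 0 < α) (hLpos : 0 < L)
    (hconv : GeodesicallyAlphaConvex α f)
    (hlip : ∀ x y : M, |f x - f y| ≤ L * dist x y)
    (β : ℝ) (hβ0 : 0 ≤ β) (hβ : β ≤ α / L ^ 2)
    (γ : ℝ → M) (hγ : IsGeodesic γ) :
    (1 / 2) * Real.exp (β * (f (γ (1 / 2)) - f (γ 0)))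
      + (1 / 2) * Real.exp (β * (f (γ (1 / 2)) - f (γ 1))) ≤ 1 := by
  refine (half_exp_add_half_exp_le _ _).trans (Real.exp_le_one_iff.2 ?_)
  have hmid := hconv.midpoint_le hγ
  have hsq : (f (γ 0) - f (γ 1)) ^ 2 ≤ (L * dist (γ 0) (γ 1)) ^ 2 :=
    sq_le_sq.2 ((hlip _ _).trans (le_abs_self _))
  have hβL : β * L ^ 2 ≤ α := (le_div_iff₀ (by positivity)).1 hβ
  set D := dist (γ 0) (γ 1)
  have hm := mul_le_mul_of_nonneg_left hmid hβ0
  have hu := mul_le_mul_of_nonneg_left hsq (sq_nonneg β)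
  have hfin := mul_le_mul_of_nonneg_left hβL (mul_nonneg hβ0 (sq_nonneg D))
  linarith
end
end

section
/- Let (M,d) be a bounded complete NPC space with diameter diam(M) > 0. Then for every p ∈ M and every β with 0 ≤ β ≤ 1/(2·diam(M)²), the function x ↦ e^{−β d(x,p)²} is geodesically concave on M. -/
/-!
Along a geodesic from `x` to `y`, the NPC inequality and `|d(p,x) - d(p,y)| ≤ d(x,y)` give
`d(p,γ(t))² ≤ ((1-t) d(p,x) + t d(p,y))²`, so `d(p,·)` itself is geodesically convex
(`NPCSpace.dist_le`). The function `r ↦ e^{-β r²}` is nonincreasing on `[0,∞)`, and concave on `[0,D]`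
when `2 β D² ≤ 1`, its second derivative being `2β(2βr² - 1)e^{-βr²}` (`concaveOn_exp_neg_mul_sq`).
A nonincreasing concave function of a convex function is concave.
-/

open MeasureTheory ProbabilityTheory Real

set_option autoImplicit false

noncomputable section

theorem IsGeodesic.dist_eq {M : Type*} [MetricSpace M] {γ : ℝ → M} (h : IsGeodesic γ) {s t : ℝ}
    (hs : s ∈ Set.Icc (0 : ℝ) 1) (ht : t ∈ Set.Icc (0 : ℝ) 1) :
    dist (γ s) (γ t) = |t - s| * dist (γ 0) (γ 1) := by
  rcases le_total s t with hst | hst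
  · rw [h s t hs.1 hst ht.2, abs_of_nonneg (sub_nonneg.2 hst)]
  · rw [dist_comm, h t s ht.1 hst hs.2, abs_of_nonpos (sub_nonpos.2 hst), neg_sub]

/-- Affine reparametrizations of a geodesic, in either direction, are geodesics. -/
theorem IsGeodesic.reparam {M : Type*} [MetricSpace M] {γ : ℝ → M} (h : IsGeodesic γ) {x y : ℝ}
    (hx : x ∈ Set.Icc (0 : ℝ) 1) (hy : y ∈ Set.Icc (0 : ℝ) 1) :
    IsGeodesic fun u => γ ((1 - u) * x + u * y) := by
  have key : ∀ u : ℝ, 0 ≤ u → u ≤ 1 → (1 - u) * x + u * y ∈ Set.Icc (0 : ℝ) 1 := fun u h0 h1 =>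
    convex_Icc (0 : ℝ) 1 hx hy (sub_nonneg.2 h1) h0 (by ring)
  intro s t hs hst ht
  have e1 := h.dist_eq (key s hs (hst.trans ht)) (key t (hs.trans hst) ht)
  have e2 := h.dist_eq (key 0 le_rfl zero_le_one) (key 1 zero_le_one le_rfl)
  simp only [e1, e2]
  have e3 : (1 - t) * x + t * y - ((1 - s) * x + s * y) = (t - s) * (y - x) := by ring
  have e4 : (1 - 1) * x + 1 * y - ((1 - 0) * x + 0 * y) = y - x := by ring
  rw [e3, e4, abs_mul, abs_of_nonneg (sub_nonneg.2 hst), mul_assoc]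

theorem NPCSpace.dist_le {M : Type*} [MetricSpace M] (hM : NPCSpace M) (p : M) {γ : ℝ → M}
    (h : IsGeodesic γ) {t : ℝ} (ht : t ∈ Set.Icc (0 : ℝ) 1) :
    dist p (γ t) ≤ (1 - t) * dist p (γ 0) + t * dist p (γ 1) := by
  have h0 : 0 ≤ t := ht.1
  have h1 : 0 ≤ 1 - t := sub_nonneg.2 ht.2
  refine le_of_sq_le_sq ?_ (by positivity)
  have hd : (dist p (γ 0) - dist p (γ 1)) ^ 2 ≤ dist (γ 0) (γ 1) ^ 2 := by
    refine sq_le_sq' ?_ ?_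
    · linarith [dist_triangle p (γ 0) (γ 1)]
    · linarith [dist_triangle_right p (γ 0) (γ 1)]
  have := mul_le_mul_of_nonneg_left hd (mul_nonneg h0 h1)
  linarith [hM.2 p γ h t ht]

theorem concaveOn_exp_neg_mul_sq {β D : ℝ} (hβ : 0 ≤ β) (hD : 2 * β * D ^ 2 ≤ 1) :
    ConcaveOn ℝ (Set.Icc 0 D) fun r => Real.exp (-β * r ^ 2) := by
  have d1 : ∀ r : ℝ, HasDerivAt (fun r => Real.exp (-β * r ^ 2))
      (-(2 * β * r) * Real.exp (-β * r ^ 2)) r := fun r => by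
    convert ((hasDerivAt_pow 2 r).const_mul (-β)).exp using 1
    push_cast; ring
  have d2 : ∀ r : ℝ, HasDerivAt (fun r => -(2 * β * r) * Real.exp (-β * r ^ 2))
      (2 * β * (2 * β * r ^ 2 - 1) * Real.exp (-β * r ^ 2)) r := fun r => by
    refine (((hasDerivAt_id' r).const_mul (2 * β)).neg.mul (d1 r)).congr_deriv ?_
    simp only [Pi.neg_apply]
    ring
  refine concaveOn_of_hasDerivWithinAt2_nonpos (convex_Icc 0 D) (by fun_prop)
    (fun r _ => (d1 r).hasDerivWithinAt) (fun r _ => (d2 r).hasDerivWithinAt) fun r hr => ?_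
  have hr' := interior_subset hr
  have : 2 * β * r ^ 2 ≤ 2 * β * D ^ 2 :=
    mul_le_mul_of_nonneg_left (pow_le_pow_left₀ hr'.1 hr'.2 2) (by positivity)
  exact mul_nonpos_of_nonpos_of_nonneg
    (mul_nonpos_of_nonneg_of_nonpos (by positivity) (by linarith)) (Real.exp_pos _).le

/-- In a bounded complete NPC space with positive diameter, for every `p` and every
`0 ≤ β ≤ 1/(2·diam(M)²)`, the map `x ↦ e^{−β d(x,p)²}` is geodesically concave. -/
theorem stmt_5 {M : Type*} [MetricSpace M] [CompleteSpace M]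
    (hNPC : NPCSpace M)
    (hbdd : Bornology.IsBounded (Set.univ : Set M))
    (hdiam : 0 < Metric.diam (Set.univ : Set M))
    (p : M) (β : ℝ) (hβ0 : 0 ≤ β)
    (hβ : β ≤ 1 / (2 * Metric.diam (Set.univ : Set M) ^ 2)) :
    GeodesicallyConcave fun x => Real.exp (-β * dist x p ^ 2) := by
  have hD : 2 * β * Metric.diam (Set.univ : Set M) ^ 2 ≤ 1 := by
    rw [le_div_iff₀ (by positivity)] at hβ
    linarith
  have hmem : ∀ x : M, dist p x ∈ Set.Icc 0 (Metric.diam (Set.univ : Set M)) := fun x =>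
    ⟨dist_nonneg, Metric.dist_le_diam_of_mem hbdd trivial trivial⟩
  intro γ hγ
  refine ⟨convex_Icc 0 1, fun x hx y hy a b ha hb hab => ?_⟩
  obtain rfl : a = 1 - b := by linarith
  have hconv := hNPC.dist_le p (hγ.reparam hx hy) ⟨hb, sub_nonneg.1 ha⟩
  have hconc := (concaveOn_exp_neg_mul_sq hβ0 hD).2 (hmem (γ x)) (hmem (γ y)) ha hb hab
  simp only [sub_zero, one_mul, zero_mul, add_zero, sub_self, zero_add] at hconv
  simp only [smul_eq_mul] at hconc
  have hmono := Real.exp_le_exp.2 (mul_le_mul_of_nonpos_left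
    (pow_le_pow_left₀ dist_nonneg hconv 2) (neg_nonpos.2 hβ0))
  simp only [Function.comp_apply, smul_eq_mul, dist_comm _ p]
  linarith
end
end

section
/- Let (M,d) be a complete metric space. Then the following are equivalent: (1) (M,d) is a geodesic space and is an NPC space; (2) every P ∈ P₂(M) has a unique barycenter x*, and for every x ∈ M one has d(x,x*)² ≤ ∫_M (d(x,y)² − d(x*,y)²) dP(y). -/
/-!
Write `F x = ∫ d(x,z)² dP(z)` for the variance functional of `P`.

If `M` is NPC, integrating the comparison inequality over `P` shows that `F` satisfies the same
inequality `F (γ t) ≤ (1-t) F (γ 0) + t F (γ 1) - t(1-t) d(γ 0, γ 1)²` along every geodesic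
(`variance_geodesic_le`). At midpoints this bounds `d(x,y)²` by the excess of `F x` and `F y` over
`inf F` (`dist_sq_le_of_lower_bound`). So minimizing sequences are Cauchy, and the limit is a
minimizer since `F` is lower semicontinuous (`variance_le_add`). The variance inequality follows by
comparing the minimizer `xs` with `γ t` on a geodesic from `xs` to `x`, dividing by `t` and letting
`t → 0`; applied to a second minimizer, it gives uniqueness.

Conversely, the variance inequality for `P = (1-t) δ_x + t δ_y`, evaluated at `x` and at `y`, forces
the barycenter `z` to satisfy `d(x,z) = t d(x,y)` and `d(z,y) = (1-t) d(x,y)`; evaluated at a general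
point `w` it then reads `d(w,z)² ≤ (1-t) d(w,x)² + t d(w,y)² - t(1-t) d(x,y)²`
(`exists_interpolant`). Taking for `w` another such barycenter, with parameter `s`, shows that the
barycenters form a geodesic from `x` to `y`. Taking for `w` the point `γ t` of any geodesic from `x`
to `y` shows `γ t = z`, so the inequality above is the NPC inequality.
-/

open MeasureTheory ProbabilityTheory Real

set_option autoImplicit false

noncomputable section

section Helpers

/-- The two-point measure `(1-t) δ_x + t δ_y`. -/
def twoPoint {M : Type*} [MeasurableSpace M] (t : ℝ) (x y : M) : Measure M :=
  ENNReal.ofReal (1 - t) • Measure.dirac x + ENNReal.ofReal t • Measure.dirac y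

lemma isProbabilityMeasure_twoPoint {M : Type*} [MeasurableSpace M] {t : ℝ}
    (ht : t ∈ Set.Icc (0 : ℝ) 1) (x y : M) :
    IsProbabilityMeasure (twoPoint t x y) := by
  refine ⟨?_⟩
  simp [twoPoint, ← ENNReal.ofReal_add (sub_nonneg.2 ht.2) ht.1]

variable {M : Type*} [MetricSpace M] [MeasurableSpace M]

section Variance

variable {P : Measure M} [IsProbabilityMeasure P]

lemma variance_geodesic_le (hM : NPCSpace M)
    (hP : ∀ x : M, Integrable (fun y => dist x y ^ 2) P)
    {γ : ℝ → M} (hγ : IsGeodesic γ) {t : ℝ} (ht : t ∈ Set.Icc (0 : ℝ) 1) :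
    ∫ z, dist (γ t) z ^ 2 ∂P ≤ (1 - t) * ∫ z, dist (γ 0) z ^ 2 ∂P
      + t * ∫ z, dist (γ 1) z ^ 2 ∂P - t * (1 - t) * dist (γ 0) (γ 1) ^ 2 := by
  have h0 := (hP (γ 0)).const_mul (1 - t)
  have h1 := (hP (γ 1)).const_mul t
  have h01 : Integrable
      (fun z => (1 - t) * dist (γ 0) z ^ 2 + t * dist (γ 1) z ^ 2) P := h0.add h1
  have hc : Integrable (fun _ : M => t * (1 - t) * dist (γ 0) (γ 1) ^ 2) P :=
    integrable_const _
  calc ∫ z, dist (γ t) z ^ 2 ∂P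
      ≤ ∫ z, ((1 - t) * dist (γ 0) z ^ 2 + t * dist (γ 1) z ^ 2
          - t * (1 - t) * dist (γ 0) (γ 1) ^ 2) ∂P := by
        refine integral_mono (hP _) (h01.sub hc) fun z => ?_
        have := hM.2 z γ hγ t ht
        simpa only [dist_comm z] using this
    _ = _ := by
        rw [integral_sub h01 hc, integral_add h0 h1, integral_const_mul,
          integral_const_mul, integral_const]
        simp

/-- Comparison at the midpoint: points where the variance is nearly minimal are close. -/
lemma dist_sq_le_of_lower_bound (hM : NPCSpace M)
    (hP : ∀ x : M, Integrable (fun y => dist x y ^ 2) P)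
    {I : ℝ} (hI : ∀ x : M, I ≤ ∫ z, dist x z ^ 2 ∂P) (x y : M) :
    dist x y ^ 2 ≤ 2 * (∫ z, dist x z ^ 2 ∂P - I) + 2 * (∫ z, dist y z ^ 2 ∂P - I) := by
  obtain ⟨γ, hγ, rfl, rfl⟩ := hM.1 x y
  have h := variance_geodesic_le hM hP hγ (t := 1 / 2) (by norm_num)
  have h' := hI (γ (1 / 2))
  linarith

/-- Quantitative lower semicontinuity of the variance. -/
lemma variance_le_add (hP : ∀ x : M, Integrable (fun y => dist x y ^ 2) P) (x y : M) :
    ∫ z, dist x z ^ 2 ∂P ≤ ∫ z, dist y z ^ 2 ∂P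
      + dist x y * (1 + ∫ z, dist y z ^ 2 ∂P) + dist x y ^ 2 := by
  have h1 := (hP y).const_mul (1 + dist x y)
  have hc : Integrable (fun _ : M => dist x y + dist x y ^ 2) P := integrable_const _
  calc ∫ z, dist x z ^ 2 ∂P
      ≤ ∫ z, ((1 + dist x y) * dist y z ^ 2 + (dist x y + dist x y ^ 2)) ∂P := by
        refine integral_mono (hP _) (h1.add hc) fun z => ?_
        have ht := dist_triangle x y z
        have h0 : 0 ≤ dist x z := dist_nonneg
        have hd : 0 ≤ dist x y := dist_nonneg
        -- `d(x,z)² ≤ (d(x,y) + d(y,z))²` and `2 d(y,z) ≤ 1 + d(y,z)²`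
        have hs : dist x z ^ 2 ≤ (dist x y + dist y z) ^ 2 := by gcongr
        have := mul_nonneg hd (sq_nonneg (dist y z - 1))
        show dist x z ^ 2 ≤ (1 + dist x y) * dist y z ^ 2 + (dist x y + dist x y ^ 2)
        nlinarith
    _ = _ := by
        rw [integral_add h1 hc, integral_const_mul, integral_const]
        simp
        ring

lemma exists_barycenter [CompleteSpace M] (hM : NPCSpace M)
    (hP : ∀ x : M, Integrable (fun y => dist x y ^ 2) P) :
    ∃ xs : M, IsBarycenter P xs := by
  have : Nonempty M := nonempty_of_isProbabilityMeasure P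
  set F : M → ℝ := fun x => ∫ z, dist x z ^ 2 ∂P with hF
  have hbdd : BddBelow (Set.range F) :=
    ⟨0, by rintro _ ⟨x, rfl⟩; exact integral_nonneg fun z => sq_nonneg _⟩
  set I : ℝ := ⨅ x, F x with hIdef
  have hI : ∀ x, I ≤ F x := fun x => ciInf_le hbdd x
  have hex : ∀ n : ℕ, ∃ x, F x < I + 1 / ((n : ℝ) + 1) := fun n =>
    exists_lt_of_ciInf_lt (lt_add_of_pos_right _ Nat.one_div_pos_of_nat)
  choose u hu using hex
  have hFu : Filter.Tendsto (fun n => F (u n)) Filter.atTop (nhds I) := by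
    refine tendsto_of_tendsto_of_tendsto_of_le_of_le tendsto_const_nhds ?_
      (fun n => hI (u n)) (fun n => (hu n).le)
    simpa using tendsto_const_nhds.add (tendsto_one_div_add_atTop_nhds_zero_nat (𝕜 := ℝ))
  have hcau : CauchySeq u := by
    refine Metric.cauchySeq_iff.2 fun ε hε => ?_
    have hev : ∀ᶠ n in Filter.atTop, F (u n) < I + ε ^ 2 / 4 :=
      hFu.eventually_lt_const (lt_add_of_pos_right _ (by positivity))
    obtain ⟨N, hN⟩ := Filter.eventually_atTop.1 hev
    refine ⟨N, fun m hm n hn => ?_⟩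
    have h := dist_sq_le_of_lower_bound hM hP hI (u m) (u n)
    have hm' := hN m hm
    have hn' := hN n hn
    simp only [hF] at hm' hn'
    exact lt_of_pow_lt_pow_left₀ 2 hε.le (by linarith)
  obtain ⟨xs, hxs⟩ := cauchySeq_tendsto_of_complete hcau
  have hd : Filter.Tendsto (fun n => dist xs (u n)) Filter.atTop (nhds 0) := by
    simpa [dist_comm] using tendsto_iff_dist_tendsto_zero.1 hxs
  have hlim : Filter.Tendsto
      (fun n => F (u n) + dist xs (u n) * (1 + F (u n)) + dist xs (u n) ^ 2)
      Filter.atTop (nhds I) := by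
    simpa using (hFu.add (hd.mul (hFu.const_add 1))).add (hd.pow 2)
  have hle : F xs ≤ I := ge_of_tendsto' hlim fun n => variance_le_add hP xs (u n)
  exact ⟨xs, fun y => hle.trans (hI y)⟩

/-- The variance inequality at a barycenter of an NPC space. -/
lemma IsBarycenter.dist_sq_le (hM : NPCSpace M)
    (hP : ∀ x : M, Integrable (fun y => dist x y ^ 2) P)
    {xs : M} (hxs : IsBarycenter P xs) (x : M) :
    dist x xs ^ 2 ≤ ∫ y, (dist x y ^ 2 - dist xs y ^ 2) ∂P := by
  rw [integral_sub (hP x) (hP xs)]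
  obtain ⟨γ, hγ, rfl, rfl⟩ := hM.1 xs x
  rw [dist_comm]
  have key : ∀ t ∈ Set.Ioc (0 : ℝ) 1, (1 - t) * dist (γ 0) (γ 1) ^ 2 ≤
      ∫ y, dist (γ 1) y ^ 2 ∂P - ∫ y, dist (γ 0) y ^ 2 ∂P := by
    intro t ht
    have h := variance_geodesic_le hM hP hγ ⟨ht.1.le, ht.2⟩
    have h' := hxs (γ t)
    refine le_of_mul_le_mul_left ?_ ht.1
    linarith
  have hlim : Filter.Tendsto (fun t : ℝ => (1 - t) * dist (γ 0) (γ 1) ^ 2)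
      (nhdsWithin 0 (Set.Ioi 0)) (nhds (dist (γ 0) (γ 1) ^ 2)) := by
    have hc : Continuous fun t : ℝ => (1 - t) * dist (γ 0) (γ 1) ^ 2 := by fun_prop
    simpa using (hc.tendsto 0).mono_left nhdsWithin_le_nhds
  refine le_of_tendsto hlim ?_
  filter_upwards [Ioc_mem_nhdsGT (zero_lt_one' ℝ)] with t ht using key t ht

end Variance

variable [BorelSpace M]

lemma integrable_twoPoint (t : ℝ) (x y : M) (f : M → ℝ) :
    Integrable f (twoPoint t x y) :=
  ((integrable_dirac (by simp)).smul_measure ENNReal.ofReal_ne_top).add_measure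
    ((integrable_dirac (by simp)).smul_measure ENNReal.ofReal_ne_top)

lemma integral_twoPoint {t : ℝ} (ht : t ∈ Set.Icc (0 : ℝ) 1) (x y : M) (f : M → ℝ) :
    ∫ z, f z ∂(twoPoint t x y) = (1 - t) * f x + t * f y := by
  rw [twoPoint, integral_add_measure
    ((integrable_dirac (by simp)).smul_measure ENNReal.ofReal_ne_top)
    ((integrable_dirac (by simp)).smul_measure ENNReal.ofReal_ne_top)]
  simp [integral_smul_measure, ENNReal.toReal_ofReal (sub_nonneg.2 ht.2),
    ENNReal.toReal_ofReal ht.1]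

/-- The barycenter of `(1-t) δ_x + t δ_y` divides `x, y` in the ratio `t : 1-t` and satisfies the
NPC comparison inequality. -/
lemma exists_interpolant
    (h : ∀ P : Measure M, IsProbabilityMeasure P →
        (∀ x : M, Integrable (fun y => dist x y ^ 2) P) →
        ∃ xs : M, ∀ x : M, dist x xs ^ 2 ≤ ∫ y, (dist x y ^ 2 - dist xs y ^ 2) ∂P)
    (x y : M) {t : ℝ} (ht : t ∈ Set.Icc (0 : ℝ) 1) :
    ∃ z : M, dist x z = t * dist x y ∧ dist z y = (1 - t) * dist x y ∧
      ∀ w : M, dist w z ^ 2 ≤ (1 - t) * dist w x ^ 2 + t * dist w y ^ 2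
        - t * (1 - t) * dist x y ^ 2 := by
  obtain ⟨z, hz⟩ := h (twoPoint t x y) (isProbabilityMeasure_twoPoint ht x y)
    fun _ => integrable_twoPoint t x y _
  simp only [integral_twoPoint ht] at hz
  obtain ⟨ht0, ht1⟩ := ht
  have hx := hz x
  have hy := hz y
  rw [dist_comm z x, dist_self] at hx
  rw [dist_comm z x, dist_self, dist_comm y z, dist_comm y x] at hy
  have htri := dist_triangle x z y
  have ha0 : 0 ≤ dist x z := dist_nonneg
  have hb0 : 0 ≤ dist z y := dist_nonneg
  have hD0 : 0 ≤ dist x y := dist_nonneg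
  have hcomb : (1 - t) * dist x z ^ 2 + t * dist z y ^ 2 ≤ t * (1 - t) * dist x y ^ 2 := by
    nlinarith [mul_le_mul_of_nonneg_left hx (sub_nonneg.2 ht1),
      mul_le_mul_of_nonneg_left hy ht0]
  have hsq : dist x y ^ 2 ≤ (dist x z + dist z y) ^ 2 := by gcongr
  -- `((1-t)a - tb)² = (1-t)a² + tb² - t(1-t)(a+b)²`, which is nonpositive
  have hprop : (1 - t) * dist x z - t * dist z y = 0 := by
    have := mul_le_mul_of_nonneg_left hsq (mul_nonneg ht0 (sub_nonneg.2 ht1))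
    refine pow_eq_zero_iff two_ne_zero |>.1 (le_antisymm ?_ (sq_nonneg _))
    nlinarith
  have hsum : dist x z + dist z y = dist x y := by
    refine le_antisymm ?_ htri
    have ha : dist x z = t * (dist x z + dist z y) := by linarith
    have hb : dist z y = (1 - t) * (dist x z + dist z y) := by linarith
    refine abs_le_of_sq_le_sq ?_ hD0 |> (le_abs_self _).trans
    generalize dist x z + dist z y = S at *
    rw [ha, hb] at hx hy
    nlinarith
  have ha : dist x z = t * dist x y := by rw [← hsum]; linarith
  have hb : dist z y = (1 - t) * dist x y := by rw [← hsum]; linarith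
  refine ⟨z, ha, hb, fun w => (hz w).trans (le_of_eq ?_)⟩
  rw [dist_comm z x, ha, hb]
  ring

lemma npcSpace_of_variance_inequality
    (h : ∀ P : Measure M, IsProbabilityMeasure P →
        (∀ x : M, Integrable (fun y => dist x y ^ 2) P) →
        ∃ xs : M, ∀ x : M, dist x xs ^ 2 ≤ ∫ y, (dist x y ^ 2 - dist xs y ^ 2) ∂P) :
    NPCSpace M := by
  refine ⟨fun x y => ?_, fun p γ hγ t ht => ?_⟩
  · have hex : ∀ t : ℝ, ∃ z : M, t ∈ Set.Icc (0 : ℝ) 1 →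
        dist x z = t * dist x y ∧ dist z y = (1 - t) * dist x y ∧
        ∀ w : M, dist w z ^ 2 ≤ (1 - t) * dist w x ^ 2 + t * dist w y ^ 2
          - t * (1 - t) * dist x y ^ 2 := by
      intro t
      by_cases ht : t ∈ Set.Icc (0 : ℝ) 1
      · obtain ⟨z, hz⟩ := exists_interpolant h x y ht
        exact ⟨z, fun _ => hz⟩
      · exact ⟨x, fun h' => absurd h' ht⟩
    choose γ hγ using hex
    have h0 : γ 0 = x := by
      have := (hγ 0 (by simp)).1
      rw [zero_mul] at this
      exact (dist_eq_zero.1 this).symm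
    have h1 : γ 1 = y := by
      have := (hγ 1 (by simp)).2.1
      rw [sub_self, zero_mul] at this
      exact dist_eq_zero.1 this
    refine ⟨γ, fun s t hs hst ht => ?_, h0, h1⟩
    rw [h0, h1]
    obtain ⟨hs1, hs2, -⟩ := hγ s ⟨hs, hst.trans ht⟩
    obtain ⟨ht1, ht2, ht3⟩ := hγ t ⟨hs.trans hst, ht⟩
    apply le_antisymm
    · have hw := ht3 (γ s)
      rw [dist_comm (γ s) x, hs1, hs2] at hw
      refine (le_abs_self _).trans (abs_le_of_sq_le_sq (hw.trans (le_of_eq ?_))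
        (mul_nonneg (sub_nonneg.2 hst) dist_nonneg))
      ring
    · have := dist_triangle4 x (γ s) (γ t) y
      rw [hs1, ht2] at this
      linarith
  · obtain ⟨z, -, -, hz⟩ := exists_interpolant h (γ 0) (γ 1) ht
    have hd0 := hγ 0 t le_rfl ht.1 ht.2
    have hd1 := hγ t 1 ht.1 ht.2 le_rfl
    have hzt : γ t = z := by
      have hw := hz (γ t)
      rw [dist_comm (γ t) (γ 0), hd0, hd1] at hw
      refine dist_eq_zero.1 (pow_eq_zero_iff two_ne_zero |>.1
        (le_antisymm (hw.trans (le_of_eq ?_)) (sq_nonneg _)))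
      ring
    rw [hzt]
    exact hz p

end Helpers

/-- Sturm's characterization: a complete metric space is a geodesic NPC space iff
every Borel probability measure with finite second moments has a unique barycenter
`x*` satisfying the variance inequality
`d(x,x*)² ≤ ∫ (d(x,y)² − d(x*,y)²) dP(y)` for all `x`. -/
theorem stmt_6 {M : Type*} [MetricSpace M] [CompleteSpace M]
    [MeasurableSpace M] [BorelSpace M] :
    NPCSpace M ↔
      ∀ P : Measure M, IsProbabilityMeasure P →
        (∀ x : M, Integrable (fun y => dist x y ^ 2) P) →
        ∃ xs : M, IsBarycenter P xs ∧ (∀ x' : M, IsBarycenter P x' → x' = xs) ∧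
          ∀ x : M, dist x xs ^ 2 ≤ ∫ y, (dist x y ^ 2 - dist xs y ^ 2) ∂P := by
  constructor
  · intro hM P _ hP
    obtain ⟨xs, hxs⟩ := exists_barycenter hM hP
    refine ⟨xs, hxs, fun x' hx' => ?_, hxs.dist_sq_le hM hP⟩
    have hle := hxs.dist_sq_le hM hP x'
    rw [integral_sub (hP x') (hP xs)] at hle
    have := hx' xs
    exact dist_eq_zero.1 (pow_eq_zero_iff two_ne_zero |>.1
      (le_antisymm (by linarith) (sq_nonneg _)))
  · intro h
    refine npcSpace_of_variance_inequality fun P hP hint => ?_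
    obtain ⟨xs, -, -, hxs⟩ := h P hP hint
    exact ⟨xs, hxs⟩
end
end

section
/- Let (M,d) be a complete NPC space, let f : M → ℝ be lower semicontinuous and geodesically convex, and let P ∈ P₂(M) with barycenter x*. If f is P-integrable, then f(x*) ≤ ∫_M f(x) dP(x). -/
/-!
Jensen's inequality by projection onto the epigraph, in the Hilbertian product `M × ℝ` with squared
distance `d(x,y)² + (a-b)²`, which is again NPC. The epigraph `C` of `f` is closed (`f` is lower
semicontinuous) and geodesically convex (`epigraph_interpolation`), so by completeness the point
`(x*, m)` with `m = ∫ f dP` has a nearest point `(p, q)` in `C` (`exists_projection`), and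
`d((x*,m), z)² ≥ d((x*,m), (p,q))² + d((p,q), z)²` for every `z ∈ C` (`projection_pythagoras`).

Take `z = (x, f x)` and integrate. The terms `f(x)²` cancel before integration, so `f ∈ L¹` is
enough; minimality of `x*` then leaves `d(x*,p)² + 2 (m-q)² ≤ 0`. Hence `(x*, m) = (p, q) ∈ C`,
which says `f x* ≤ m`.
-/

open MeasureTheory ProbabilityTheory Real

set_option autoImplicit false

noncomputable section

/-- The product comparison inequality, with an interpolating point inside the epigraph: the real
coordinate contributes an equality, the `M` coordinate the NPC inequality. -/
lemma epigraph_interpolation {M : Type*} [MetricSpace M] (hNPC : NPCSpace M)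
    {f : M → ℝ} (hconv : GeodesicallyConvex f) {x y : M} {a b : ℝ} (hx : f x ≤ a) (hy : f y ≤ b)
    {t : ℝ} (ht0 : 0 ≤ t) (ht1 : t ≤ 1) :
    ∃ (z : M) (c : ℝ), f z ≤ c ∧ ∀ (o : M) (r : ℝ),
      dist o z ^ 2 + (r - c) ^ 2 ≤
        (1 - t) * (dist o x ^ 2 + (r - a) ^ 2) + t * (dist o y ^ 2 + (r - b) ^ 2)
          - t * (1 - t) * (dist x y ^ 2 + (a - b) ^ 2) := by
  obtain ⟨γ, hγ, h0, h1⟩ := hNPC.1 x y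
  refine ⟨γ t, (1 - t) * a + t * b, ?_, fun o r => ?_⟩
  · have h := (hconv γ hγ).2 (x := 0) (y := 1) (by simp) (by simp) (sub_nonneg.2 ht1) ht0 (by ring)
    simp only [smul_eq_mul, mul_zero, mul_one, zero_add, Function.comp_apply, h0, h1] at h
    have e1 := mul_le_mul_of_nonneg_left hx (sub_nonneg.2 ht1)
    have e2 := mul_le_mul_of_nonneg_left hy ht0
    linarith
  · have h := hNPC.2 o γ hγ t ⟨ht0, ht1⟩
    rw [h0, h1] at h
    have e : (r - ((1 - t) * a + t * b)) ^ 2 =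
        (1 - t) * (r - a) ^ 2 + t * (r - b) ^ 2 - t * (1 - t) * (a - b) ^ 2 := by ring
    linarith

/-- Every point `(o, r)` has a nearest point in the epigraph: by the midpoint case of
`epigraph_interpolation`, minimizing sequences are Cauchy. -/
lemma exists_projection {M : Type*} [MetricSpace M] [CompleteSpace M] (hNPC : NPCSpace M)
    {f : M → ℝ} (hlsc : LowerSemicontinuous f) (hconv : GeodesicallyConvex f) (o : M) (r : ℝ) :
    ∃ (p : M) (q : ℝ), f p ≤ q ∧ ∀ (x : M) (a : ℝ), f x ≤ a →
      dist o p ^ 2 + (r - q) ^ 2 ≤ dist o x ^ 2 + (r - a) ^ 2 := by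
  set G : M × ℝ → ℝ := fun z => dist o z.1 ^ 2 + (r - z.2) ^ 2 with hG
  have hGc : Continuous G := by fun_prop
  set C : Set (M × ℝ) := {z | f z.1 ≤ z.2} with hC
  have hCc : IsClosed C := hlsc.isClosed_epigraph
  have hne : (G '' C).Nonempty := ⟨_, (o, f o), le_refl (f o), rfl⟩
  have hbdd : BddBelow (G '' C) := by
    refine ⟨0, ?_⟩
    rintro _ ⟨z, -, rfl⟩
    positivity
  set D := sInf (G '' C) with hD
  have hDle : ∀ z ∈ C, D ≤ G z := fun z hz => csInf_le hbdd ⟨z, hz, rfl⟩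
  have hseq : ∀ n : ℕ, ∃ z ∈ C, G z < D + 1 / ((n : ℝ) + 1) := by
    intro n
    obtain ⟨_, ⟨z, hz, rfl⟩, h⟩ := exists_lt_of_csInf_lt hne
      (show sInf (G '' C) < D + 1 / ((n : ℝ) + 1) from lt_add_of_pos_right _ (by positivity))
    exact ⟨z, hz, h⟩
  choose u huC hu using hseq
  have key : ∀ n k N : ℕ, N ≤ n → N ≤ k →
      dist (u n) (u k) ≤ Real.sqrt (4 * (1 / ((N : ℝ) + 1))) := by
    intro n k N hn hk
    obtain ⟨z, c, hzc, h⟩ := epigraph_interpolation hNPC hconv (huC n) (huC k)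
      (t := 1 / 2) (by norm_num) (by norm_num)
    have h1 := h o r
    have h2 : D ≤ dist o z ^ 2 + (r - c) ^ 2 := hDle (z, c) hzc
    have h3 : dist o (u n).1 ^ 2 + (r - (u n).2) ^ 2 < D + 1 / ((n : ℝ) + 1) := hu n
    have h4 : dist o (u k).1 ^ 2 + (r - (u k).2) ^ 2 < D + 1 / ((k : ℝ) + 1) := hu k
    have h5 : 1 / ((n : ℝ) + 1) ≤ 1 / ((N : ℝ) + 1) := Nat.one_div_le_one_div hn
    have h6 : 1 / ((k : ℝ) + 1) ≤ 1 / ((N : ℝ) + 1) := Nat.one_div_le_one_div hk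
    have h7 : dist (u n).1 (u k).1 ^ 2 + ((u n).2 - (u k).2) ^ 2 ≤ 4 * (1 / ((N : ℝ) + 1)) := by
      linarith
    rw [Prod.dist_eq]
    refine max_le ?_ ?_
    · exact Real.le_sqrt_of_sq_le (by nlinarith [sq_nonneg ((u n).2 - (u k).2)])
    · refine Real.le_sqrt_of_sq_le ?_
      rw [Real.dist_eq, sq_abs]
      nlinarith [sq_nonneg (dist (u n).1 (u k).1)]
  have hcauchy : CauchySeq u := by
    refine cauchySeq_of_le_tendsto_0 _ key ?_
    have := (tendsto_one_div_add_atTop_nhds_zero_nat (𝕜 := ℝ)).const_mul 4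
    have := (Real.continuous_sqrt.tendsto _).comp this
    rwa [mul_zero, Real.sqrt_zero] at this
  obtain ⟨w, hw⟩ := cauchySeq_tendsto_of_complete hcauchy
  have hwC : w ∈ C := hCc.mem_of_tendsto hw (Filter.Eventually.of_forall huC)
  have hwD : G w ≤ D := by
    have h1 := (hGc.tendsto w).comp hw
    have h2 := (tendsto_one_div_add_atTop_nhds_zero_nat (𝕜 := ℝ)).const_add D
    rw [add_zero] at h2
    exact le_of_tendsto_of_tendsto' h1 h2 fun n => (hu n).le
  exact ⟨w.1, w.2, hwC, fun x a hxa => hwD.trans (hDle (x, a) hxa)⟩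

/-- Obtuse-angle property of the projection, from the first variation at `(p, q)` along a geodesic
of the epigraph ending at `(x, a)`. -/
lemma projection_pythagoras {M : Type*} [MetricSpace M] (hNPC : NPCSpace M)
    {f : M → ℝ} (hconv : GeodesicallyConvex f) {o p : M} {r q : ℝ} (hpq : f p ≤ q)
    (hmin : ∀ (x : M) (a : ℝ), f x ≤ a →
      dist o p ^ 2 + (r - q) ^ 2 ≤ dist o x ^ 2 + (r - a) ^ 2)
    {x : M} {a : ℝ} (hxa : f x ≤ a) :
    dist o p ^ 2 + (r - q) ^ 2 + (dist p x ^ 2 + (q - a) ^ 2) ≤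
      dist o x ^ 2 + (r - a) ^ 2 := by
  have hle := hmin x a hxa
  have hvar : ∀ t : ℝ, 0 < t → t ≤ 1 →
      dist o p ^ 2 + (r - q) ^ 2 + (1 - t) * (dist p x ^ 2 + (q - a) ^ 2) ≤
        dist o x ^ 2 + (r - a) ^ 2 := by
    intro t ht0 ht1
    obtain ⟨z, c, hzc, h⟩ := epigraph_interpolation hNPC hconv hpq hxa ht0.le ht1
    have h1 := (hmin z c hzc).trans (h o r)
    refine le_of_mul_le_mul_left ?_ ht0
    linarith
  generalize dist o p ^ 2 + (r - q) ^ 2 = D at *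
  generalize dist p x ^ 2 + (q - a) ^ 2 = E at *
  generalize dist o x ^ 2 + (r - a) ^ 2 = G at *
  by_contra! hlt
  have hE : 0 < E := by linarith
  -- For this `t`, the error term `t * E` is half of the assumed defect `D + E - G`.
  have h := hvar ((D + E - G) / (2 * E)) (div_pos (by linarith) (by linarith))
    ((div_le_one (by linarith)).2 (by linarith))
  have e : (D + E - G) / (2 * E) * E = (D + E - G) / 2 := by field_simp
  rw [sub_mul, e] at h
  linarith


/-- Generalized Jensen inequality in a complete NPC space: if `f` is lower
semicontinuous and geodesically convex, `P` is a Borel probability measure with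
finite second moments with barycenter `x*`, and `f` is `P`-integrable, then
`f(x*) ≤ ∫ f dP`. -/
theorem stmt_7 {M : Type*} [MetricSpace M] [CompleteSpace M]
    [MeasurableSpace M] [BorelSpace M]
    (hNPC : NPCSpace M)
    (f : M → ℝ) (hlsc : LowerSemicontinuous f) (hconv : GeodesicallyConvex f)
    (P : Measure M) [IsProbabilityMeasure P]
    (hP2 : ∀ x : M, Integrable (fun y => dist x y ^ 2) P)
    (xs : M) (hxs : IsBarycenter P xs)
    (hf : Integrable f P) :
    f xs ≤ ∫ x, f x ∂P := by
  -- `(p, q)` is the projection of `(xs, ∫ f)` onto the epigraph.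
  obtain ⟨p, q, hpq, hmin⟩ := exists_projection hNPC hlsc hconv xs (∫ x, f x ∂P)
  have hpyth := fun x => projection_pythagoras hNPC hconv hpq hmin (le_refl (f x))
  have hbar := hxs p
  generalize hm : ∫ x, f x ∂P = m at *
  -- The squares `f x ^ 2` cancel, leaving an integrable affine function of `f x`.
  have hpt : ∀ x, dist xs p ^ 2 + 2 * (q ^ 2 - m * q) ≤
      dist xs x ^ 2 - dist p x ^ 2 + 2 * (q - m) * f x := fun x => by
    linarith [hpyth x]
  have hsub : Integrable (fun x => dist xs x ^ 2 - dist p x ^ 2) P := (hP2 xs).sub (hP2 p)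
  have hint : dist xs p ^ 2 + 2 * (q ^ 2 - m * q) ≤
      ∫ x, (dist xs x ^ 2 - dist p x ^ 2 + 2 * (q - m) * f x) ∂P := by
    have h := integral_mono (μ := P) (integrable_const _)
      (hsub.add (hf.const_mul (2 * (q - m)))) hpt
    simpa using h
  rw [integral_add hsub (hf.const_mul _), integral_sub (hP2 xs) (hP2 p),
    integral_const_mul, hm] at hint
  have hzero : dist xs p ^ 2 + 2 * (q - m) ^ 2 ≤ 0 := by linarith
  have hd : dist xs p = 0 := by
    refine pow_eq_zero_iff two_ne_zero |>.1 (le_antisymm ?_ (sq_nonneg _))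
    linarith [sq_nonneg (q - m)]
  have hqm : q - m = 0 := by
    refine pow_eq_zero_iff two_ne_zero |>.1 (le_antisymm ?_ (sq_nonneg _))
    linarith [sq_nonneg (dist xs p)]
  rw [dist_eq_zero.1 hd]
  linarith
end
end

section
/- Let (M,d) be a bounded complete NPC space with diam(M) > 0, take the outcome set Z = M and the loss ℓ(m,z) = d(m,z)². Let π be a prior probability measure on Θ and let the forecaster's prediction m̂_t be the barycenter of the pushforward P_t ∈ P₂(M) of the exponential-weights posterior π_t (with parameter β = 1/(2·diam(M)²)) under θ ↦ m_{θ,t}. Then for every T ≥ 1, uniformly over the outcome sequence and the expert advice, L̂_T ≤ inf_q { ∫_Θ L_{θ,T} dq(θ) + 2·diam(M)²·D(q‖π) }, where the infimum runs over all probability measures q on Θ. -/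
/-! The forecaster's loss is compared with the potential `W t = ∫ exp (-β L θ t) dπ`. Two facts give
the bound.

* **Jensen's inequality at a barycenter** (`exp_sq_dist_jensen`). With `D` the diameter and
  `β = 1 / (2 D ^ 2)`, a barycenter `b` of a probability measure `P` satisfies
  `∫ exp (-β d(x,z)²) dP(x) ≤ exp (-β d(b,z)²)`. Let `γ` be a geodesic from `b` to `z` and `u x` the
  right derivative at `0` of `s ↦ d(x, γ s)²`. Minimality of `b` gives `0 ≤ ∫ u dP`, because the
  difference quotients, which decrease as `s ↓ 0` by nonpositive curvature, are uniformly bounded.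
  The curvature inequality also gives `d(x,z)² ≥ d(x,b)² + d(b,z)² + u x`, and the triangle inequality
  gives `|u x| ≤ 2 d(x,b) d(b,z)`. It then suffices to integrate the pointwise "tangent line" bound
  `exp (-β d(x,z)²) ≤ exp (-β d(b,z)²) * (1 - β u x)`, which is the scalar inequality
  `exp_tangent_bound`. It is the Euclidean statement that `exp (-β |·|²)` is concave on a ball of
  radius `D`.
* **Gibbs' variational inequality** (`neg_log_integral_exp_le`):
  `-log ∫ exp f dπ ≤ -∫ f dq + D(q‖π)`.

Since `W (t+1) / W t` is the integral of `exp (-β d(m θ t, z t)²)` against the posterior, the first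
fact telescopes to `W T ≤ exp (-β L̂ T)`. The second, with `f = -β L · T`, bounds `-log (W T)`. -/

open MeasureTheory ProbabilityTheory Real

set_option autoImplicit false

noncomputable section

/-! ### Scalar tangent line inequality -/

lemma exp_sub_sq_half_le {y : ℝ} (hy : 0 ≤ y) : exp (y - y ^ 2 / 2) ≤ 1 + y := by
  rw [← Real.le_log_iff_exp_le (by linarith)]
  refine le_trans ?_ (Real.le_log_one_add_of_nonneg hy)
  rw [le_div_iff₀ (by linarith)]
  nlinarith [pow_nonneg hy 3]

/-- Normalized tangent line bound. In a plane, `X = |p - b|²`, `R = |b|²` and `w = ⟪p - b, b⟫` for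
points `b`, `p` of the unit ball; of this picture, the hypotheses keep the Cauchy–Schwarz inequality
and the bounds on `|b|²` and `|p|²`. -/
lemma exp_tangent_bound_unit {X R w : ℝ} (hX : 0 ≤ X) (hR : 0 ≤ R) (hw : w ^ 2 ≤ X * R)
    (hR1 : R ≤ 1) (h1 : X + 2 * w + R ≤ 1) : exp (-(X / 2 + w)) ≤ 1 - w := by
  rcases le_or_gt w 0 with h | h
  · have h2 := exp_sub_sq_half_le (y := -w) (by linarith)
    have h3 : w ^ 2 ≤ X := by nlinarith
    calc exp (-(X / 2 + w)) ≤ exp (-w - (-w) ^ 2 / 2) := by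
          apply Real.exp_le_exp.mpr; nlinarith
      _ ≤ 1 - w := by linarith
  · -- AM-GM confines `w` to `(0, 1/4]`, and `hw` then forces `X` to exceed `w²` by a cubic term
    have h2 : 2 * w ≤ X + R := by
      refine (pow_le_pow_iff_left₀ (by linarith) (by linarith) two_ne_zero).mp ?_
      nlinarith [sq_nonneg (X - R)]
    have hw4 : w ≤ 1 / 4 := by linarith
    have h3 : w ^ 2 ≤ X * (1 - 2 * w) := by nlinarith
    have h4 : w ^ 2 + 2 * w ^ 3 ≤ X := by
      have : (w ^ 2 + 2 * w ^ 3) * (1 - 2 * w) ≤ X * (1 - 2 * w) := by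
        nlinarith [sq_nonneg (w ^ 2)]
      exact le_of_mul_le_mul_right this (by linarith)
    have hw2 : 0 < w ^ 2 := by positivity
    have hw3 : 0 < w ^ 3 := by positivity
    have h5 : 1 + w + w ^ 2 + 3 / 2 * w ^ 3 ≤ exp (X / 2 + w) := by
      have := Real.quadratic_le_exp_of_nonneg (x := X / 2 + w) (by positivity)
      have h6 : w + w ^ 2 / 2 ≤ X / 2 + w := by linarith
      have h7 : (w + w ^ 2 / 2) ^ 2 ≤ (X / 2 + w) ^ 2 := by gcongr
      nlinarith [sq_nonneg (w ^ 2)]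
    rw [Real.exp_neg]
    apply inv_le_of_inv_le₀ (by linarith)
    refine le_trans ?_ h5
    rw [inv_le_iff_one_le_mul₀ (by linarith)]
    nlinarith

/-- Scaled tangent line bound: `a`, `r` play the roles of `d(x,b)`, `d(b,z)`, and `u` that of the
derivative of the squared distance to `x` along the geodesic from `b` to `z`. -/
lemma exp_tangent_bound {D a r u : ℝ} (hD : 0 < D) (hr : 0 ≤ r)
    (hu : |u| ≤ 2 * a * r) (hrD : r ≤ D) (h1 : a ^ 2 + u + r ^ 2 ≤ D ^ 2) :
    exp (-(1 / (2 * D ^ 2)) * (a ^ 2 + u)) ≤ 1 - 1 / (2 * D ^ 2) * u := by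
  have hD2 : 0 < D ^ 2 := by positivity
  have key := exp_tangent_bound_unit (X := a ^ 2 / D ^ 2) (R := r ^ 2 / D ^ 2)
    (w := u / (2 * D ^ 2)) (by positivity) (by positivity) ?_ ?_ ?_
  · convert key using 2
    · field_simp
    · field_simp
  · have : u ^ 2 ≤ (2 * a * r) ^ 2 := by
      rw [← sq_abs]; gcongr
    rw [div_pow, div_mul_div_comm, div_le_div_iff₀ (by positivity) (by positivity)]
    nlinarith [mul_le_mul_of_nonneg_right this (by positivity : 0 ≤ D ^ 2 * D ^ 2)]
  · rw [div_le_one hD2]; gcongr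
  · have : a ^ 2 / D ^ 2 + 2 * (u / (2 * D ^ 2)) + r ^ 2 / D ^ 2 = (a ^ 2 + u + r ^ 2) / D ^ 2 := by
      field_simp
    rw [this, div_le_one hD2]; exact h1

/-! ### Squared distances along geodesics -/

section Slope

variable {M : Type*} [MetricSpace M]

/-- Difference quotient at `0` of the squared distance to `x` along `γ`. -/
def sqDistSlope (γ : ℝ → M) (x : M) (s : ℝ) : ℝ :=
  (dist x (γ s) ^ 2 - dist x (γ 0) ^ 2) / s

lemma dist_geodesic_zero {γ : ℝ → M} (hγ : IsGeodesic γ) {s : ℝ} (hs : 0 < s) (hs1 : s ≤ 1) :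
    dist (γ 0) (γ s) = s * dist (γ 0) (γ 1) := by
  simpa using hγ 0 s le_rfl hs.le hs1

lemma sqDistSlope_mono (hNPC : NPCSpace M) {γ : ℝ → M} (hγ : IsGeodesic γ) (x : M) {s s' : ℝ}
    (hs : 0 < s) (hss : s ≤ s') (hs' : s' ≤ 1) :
    sqDistSlope γ x s ≤ sqDistSlope γ x s' := by
  have hs0 : 0 < s' := hs.trans_le hss
  -- the restriction of `γ` to `[0, s']`, rescaled to `[0, 1]`, is a geodesic
  have hg : IsGeodesic (fun t => γ (t * s')) := by
    intro p p' h0 hp h1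
    simp only [zero_mul, one_mul]
    rw [hγ (p * s') (p' * s') (by positivity) (by gcongr) (by nlinarith),
      dist_geodesic_zero hγ hs0 hs']
    ring
  have ht1 : s / s' ≤ 1 := (div_le_one hs0).mpr hss
  have ht0 : 0 < s / s' := by positivity
  have h := hNPC.2 x _ hg (s / s') ⟨ht0.le, ht1⟩
  simp only [zero_mul, one_mul, div_mul_cancel₀ s hs0.ne'] at h
  have hnn : 0 ≤ s / s' * (1 - s / s') * dist (γ 0) (γ s') ^ 2 := by
    have : 0 ≤ 1 - s / s' := by linarith
    positivity
  unfold sqDistSlope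
  rw [div_le_iff₀ hs]
  have : (dist x (γ s') ^ 2 - dist x (γ 0) ^ 2) / s' * s
      = s / s' * (dist x (γ s') ^ 2 - dist x (γ 0) ^ 2) := by ring
  rw [this]
  nlinarith

lemma sqDistSlope_lower {γ : ℝ → M} (hγ : IsGeodesic γ) (x : M) {s : ℝ}
    (hs : 0 < s) (hs1 : s ≤ 1) :
    -(2 * dist x (γ 0) * dist (γ 0) (γ 1)) ≤ sqDistSlope γ x s := by
  have h := dist_geodesic_zero hγ hs hs1
  have ht := dist_triangle_right x (γ 0) (γ s)
  rw [h] at ht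
  have ha : 0 ≤ dist x (γ 0) := dist_nonneg
  have hd : 0 ≤ dist x (γ s) := dist_nonneg
  unfold sqDistSlope
  rw [le_div_iff₀ hs]
  generalize dist x (γ 0) = a at *
  generalize dist x (γ s) = d at *
  have hq : 0 ≤ s * dist (γ 0) (γ 1) := by positivity
  have e : -(2 * a * dist (γ 0) (γ 1)) * s = -(2 * a * (s * dist (γ 0) (γ 1))) := by ring
  rw [e]
  generalize s * dist (γ 0) (γ 1) = q at *
  rcases le_total a q with h1 | h1 <;> nlinarith

lemma sqDistSlope_upper {γ : ℝ → M} (hγ : IsGeodesic γ) (x : M) {s : ℝ}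
    (hs : 0 < s) (hs1 : s ≤ 1) :
    sqDistSlope γ x s ≤ 2 * dist x (γ 0) * dist (γ 0) (γ 1) + s * dist (γ 0) (γ 1) ^ 2 := by
  have h := dist_geodesic_zero hγ hs hs1
  have ht := dist_triangle x (γ 0) (γ s)
  rw [h] at ht
  have hd : 0 ≤ dist x (γ s) := dist_nonneg
  unfold sqDistSlope
  rw [div_le_iff₀ hs]
  nlinarith [pow_le_pow_left₀ hd ht 2]

lemma sqDistSlope_npc (hNPC : NPCSpace M) {γ : ℝ → M} (hγ : IsGeodesic γ) (x : M) {s : ℝ}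
    (hs : 0 < s) (hs1 : s ≤ 1) :
    sqDistSlope γ x s ≤
      dist x (γ 1) ^ 2 - dist x (γ 0) ^ 2 - (1 - s) * dist (γ 0) (γ 1) ^ 2 := by
  have h := hNPC.2 x γ hγ s ⟨hs.le, hs1⟩
  unfold sqDistSlope
  rw [div_le_iff₀ hs]
  linarith

/-- The right derivative at `0` of the squared distance to `x` along a geodesic exists, as the limit
of a monotone bounded family, and inherits the bounds on the difference quotients. -/
lemma exists_sqDist_deriv (hNPC : NPCSpace M) {γ : ℝ → M} (hγ : IsGeodesic γ) (x : M) :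
    ∃ u : ℝ, Filter.Tendsto (fun n : ℕ => sqDistSlope γ x (1 / ((n : ℝ) + 1))) Filter.atTop
        (nhds u) ∧
      |u| ≤ 2 * dist x (γ 0) * dist (γ 0) (γ 1) ∧
      dist x (γ 0) ^ 2 + u + dist (γ 0) (γ 1) ^ 2 ≤ dist x (γ 1) ^ 2 := by
  have hpos : ∀ n : ℕ, (0 : ℝ) < 1 / ((n : ℝ) + 1) := fun n => Nat.one_div_pos_of_nat
  have hle : ∀ n : ℕ, 1 / ((n : ℝ) + 1) ≤ 1 := fun n => by
    rw [div_le_one (by positivity)]; linarith [n.cast_nonneg (α := ℝ)]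
  have hanti : Antitone (fun n : ℕ => sqDistSlope γ x (1 / ((n : ℝ) + 1))) := fun i j hij =>
    sqDistSlope_mono hNPC hγ x (hpos j) (Nat.one_div_le_one_div hij) (hle i)
  have hbelow : BddBelow (Set.range fun n : ℕ => sqDistSlope γ x (1 / ((n : ℝ) + 1))) := by
    refine ⟨-(2 * dist x (γ 0) * dist (γ 0) (γ 1)), ?_⟩
    rintro _ ⟨n, rfl⟩
    exact sqDistSlope_lower hγ x (hpos n) (hle n)
  have hlim := tendsto_atTop_ciInf hanti hbelow
  have h0 := tendsto_one_div_add_atTop_nhds_zero_nat (𝕜 := ℝ)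
  refine ⟨_, hlim, abs_le.mpr ⟨?_, ?_⟩, ?_⟩
  · exact ge_of_tendsto' hlim fun n => sqDistSlope_lower hγ x (hpos n) (hle n)
  · have h2 := (h0.mul_const (dist (γ 0) (γ 1) ^ 2)).const_add
      (2 * dist x (γ 0) * dist (γ 0) (γ 1))
    rw [zero_mul, add_zero] at h2
    exact le_of_tendsto_of_tendsto' hlim h2 fun n => sqDistSlope_upper hγ x (hpos n) (hle n)
  · have h2 := ((h0.const_sub 1).mul_const (dist (γ 0) (γ 1) ^ 2)).const_sub
      (dist x (γ 1) ^ 2 - dist x (γ 0) ^ 2)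
    have h3 := le_of_tendsto_of_tendsto' hlim h2
      fun n => sqDistSlope_npc hNPC hγ x (hpos n) (hle n)
    linarith

variable [MeasurableSpace M] [BorelSpace M]

lemma integrable_sq_dist {D : ℝ} (hdist : ∀ x y : M, dist x y ≤ D)
    (P : Measure M) [IsFiniteMeasure P] (y : M) : Integrable (fun x => dist y x ^ 2) P := by
  refine Integrable.of_bound (by fun_prop) (D ^ 2) (ae_of_all _ fun x => ?_)
  rw [Real.norm_of_nonneg (by positivity)]
  have := hdist y x
  gcongr

/-! ### Jensen's inequality at a barycenter -/

/-- Jensen's inequality at a barycenter for the function `exp (-β d(·,z)²)`. -/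
lemma exp_sq_dist_jensen (hNPC : NPCSpace M) {D : ℝ} (hD : 0 < D)
    (hdist : ∀ x y : M, dist x y ≤ D) (P : Measure M) [IsProbabilityMeasure P] {b : M}
    (hb : IsBarycenter P b) (z : M) :
    ∫ x, exp (-(1 / (2 * D ^ 2)) * dist x z ^ 2) ∂P ≤
      exp (-(1 / (2 * D ^ 2)) * dist b z ^ 2) := by
  obtain ⟨γ, hγ, rfl, rfl⟩ := hNPC.1 b z
  choose u hlim habs hnpc using fun x => exists_sqDist_deriv hNPC hγ x
  have hpos : ∀ n : ℕ, (0 : ℝ) < 1 / ((n : ℝ) + 1) := fun n => Nat.one_div_pos_of_nat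
  have hle : ∀ n : ℕ, 1 / ((n : ℝ) + 1) ≤ 1 := fun n => by
    rw [div_le_one (by positivity)]; linarith [n.cast_nonneg (α := ℝ)]
  have hslope_meas : ∀ s, Measurable fun x => sqDistSlope γ x s := fun s => by
    unfold sqDistSlope; fun_prop
  have hu_meas : Measurable u :=
    measurable_of_tendsto_metrizable (fun n => hslope_meas _) (tendsto_pi_nhds.mpr hlim)
  have hbound : ∀ (n : ℕ) (x : M), ‖sqDistSlope γ x (1 / ((n : ℝ) + 1))‖ ≤ 3 * D ^ 2 := by
    intro n x
    have h1 := sqDistSlope_lower hγ x (hpos n) (hle n)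
    have h2 := sqDistSlope_upper hγ x (hpos n) (hle n)
    have h3 : dist x (γ 0) * dist (γ 0) (γ 1) ≤ D * D :=
      mul_le_mul (hdist _ _) (hdist _ _) dist_nonneg hD.le
    have h4 : 1 / ((n : ℝ) + 1) * dist (γ 0) (γ 1) ^ 2 ≤ 1 * D ^ 2 := by
      have := hdist (γ 0) (γ 1)
      have := hle n
      gcongr
    rw [Real.norm_eq_abs, abs_le]
    constructor <;> nlinarith
  have hint_lim := tendsto_integral_of_dominated_convergence (μ := P)
    (F := fun (n : ℕ) x => sqDistSlope γ x (1 / ((n : ℝ) + 1))) (f := u) (fun _ => 3 * D ^ 2)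
    (fun n => (hslope_meas _).aestronglyMeasurable) (integrable_const _)
    (fun n => ae_of_all _ (hbound n)) (ae_of_all _ hlim)
  have hu0 : 0 ≤ ∫ x, u x ∂P := by
    refine ge_of_tendsto' hint_lim fun n => ?_
    have hbn := hb (γ (1 / ((n : ℝ) + 1)))
    unfold sqDistSlope
    rw [integral_div]
    refine div_nonneg ?_ (hpos n).le
    simp_rw [dist_comm _ (γ _)]
    rw [integral_sub (integrable_sq_dist hdist P _) (integrable_sq_dist hdist P _)]
    linarith
  have hu_int : Integrable u P := by
    refine Integrable.of_bound hu_meas.aestronglyMeasurable (3 * D ^ 2) (ae_of_all _ fun x => ?_)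
    exact le_of_tendsto' (hlim x).norm fun n => hbound n x
  set β := 1 / (2 * D ^ 2) with hβ
  have hβ0 : 0 < β := by positivity
  set r := dist (γ 0) (γ 1) with hr
  have hpt : ∀ x, exp (-β * dist x (γ 1) ^ 2) ≤ exp (-β * r ^ 2) * (1 - β * u x) := by
    intro x
    have hc : dist x (γ 1) ^ 2 ≤ D ^ 2 := by
      have := hdist x (γ 1)
      gcongr
    have h := exp_tangent_bound hD (hr ▸ dist_nonneg) (habs x) (hdist _ _)
      ((hnpc x).trans hc)
    calc exp (-β * dist x (γ 1) ^ 2)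
        ≤ exp (-β * r ^ 2 + -β * (dist x (γ 0) ^ 2 + u x)) := by
          apply Real.exp_le_exp.mpr
          nlinarith [mul_le_mul_of_nonneg_left (hnpc x) hβ0.le]
      _ = exp (-β * r ^ 2) * exp (-β * (dist x (γ 0) ^ 2 + u x)) := Real.exp_add _ _
      _ ≤ _ := by gcongr
  have hint2 : Integrable (fun x => exp (-β * r ^ 2) * (1 - β * u x)) P :=
    ((integrable_const _).sub (hu_int.const_mul β)).const_mul _
  calc ∫ x, exp (-β * dist x (γ 1) ^ 2) ∂P
      ≤ ∫ x, exp (-β * r ^ 2) * (1 - β * u x) ∂P :=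
        integral_mono_of_nonneg (ae_of_all _ fun x => (Real.exp_pos _).le) hint2
          (ae_of_all _ hpt)
    _ = exp (-β * r ^ 2) * (1 - β * ∫ x, u x ∂P) := by
        rw [integral_const_mul, integral_sub (integrable_const _) (hu_int.const_mul β),
          integral_const_mul]
        simp
    _ ≤ exp (-β * r ^ 2) * 1 := by
        gcongr
        nlinarith
    _ = _ := mul_one _

end Slope

/-! ### Gibbs' variational inequality and tilted measures -/

/-- Gibbs' variational inequality: nonnegativity of the divergence of `q` from the tilted measure
`prior.tilted f`. -/
lemma neg_log_integral_exp_le {Θ : Type*} [MeasurableSpace Θ] (prior q : Measure Θ)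
    [IsProbabilityMeasure prior] [IsProbabilityMeasure q] (hq : q ≪ prior) {f : Θ → ℝ}
    (hf : Integrable f q) (hexp : Integrable (fun θ => exp (f θ)) prior)
    (hKL : Integrable (llr q prior) q) :
    -Real.log (∫ θ, exp (f θ) ∂prior) ≤ -(∫ θ, f θ ∂q) + KLdiv q prior := by
  have : IsProbabilityMeasure (prior.tilted f) := isProbabilityMeasure_tilted hexp
  have h := InformationTheory.integral_llr_add_sub_measure_univ_nonneg
    (hq.trans (absolutelyContinuous_tilted hexp))
    (integrable_llr_tilted_right hq hf hKL hexp)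
  rw [integral_llr_tilted_right hq hf hexp hKL] at h
  simp only [probReal_univ] at h
  have e : KLdiv q prior = ∫ θ, llr q prior θ ∂q := rfl
  rw [e]
  linarith

/-- Normalizing the density `exp f` through the total mass gives Mathlib's tilted measure. -/
lemma tilted_eq_inv_smul_withDensity {Θ : Type*} [MeasurableSpace Θ] (prior : Measure Θ)
    [IsProbabilityMeasure prior] {f : Θ → ℝ} (hf : Measurable f)
    (hexp : Integrable (fun θ => exp (f θ)) prior) :
    ((prior.withDensity fun θ => ENNReal.ofReal (exp (f θ))) Set.univ)⁻¹ •
      prior.withDensity (fun θ => ENNReal.ofReal (exp (f θ))) = prior.tilted f := by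
  have hpos : 0 < ∫ θ, exp (f θ) ∂prior := integral_exp_pos hexp
  rw [withDensity_apply _ MeasurableSet.univ, Measure.restrict_univ,
    ← ofReal_integral_eq_lintegral_ofReal hexp (ae_of_all _ fun θ => (Real.exp_pos _).le),
    ← withDensity_smul _ (by fun_prop), Measure.tilted]
  congr 1
  ext θ
  rw [Pi.smul_apply, smul_eq_mul, ENNReal.ofReal_div_of_pos hpos, mul_comm, div_eq_mul_inv]

/-! ### Telescoping the potential -/

/-- PAC-Bayes bound for the generalized EWA forecaster in a bounded complete NPC
space with the squared-distance loss `ℓ(m,z) = d(m,z)²` and tuning parameter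
`β = 1/(2·diam(M)²)`: for every `T ≥ 1` and every probability measure `q ≪ π` on
`Θ`, `L̂_T ≤ ∫ L_{θ,T} dq(θ) + 2·diam(M)²·D(q‖π)` (times indexed by `0,…,T−1`). -/
theorem stmt_10 {M Θ : Type*} [MetricSpace M] [CompleteSpace M]
    [MeasurableSpace M] [BorelSpace M] [MeasurableSpace Θ]
    (hNPC : NPCSpace M)
    (hbdd : Bornology.IsBounded (Set.univ : Set M))
    (hdiam : 0 < Metric.diam (Set.univ : Set M))
    (β : ℝ) (hβ : β = 1 / (2 * Metric.diam (Set.univ : Set M) ^ 2))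
    (prior : Measure Θ) [IsProbabilityMeasure prior]
    (z : ℕ → M) (m : Θ → ℕ → M)
    (hmeas : ∀ t, Measurable fun θ => m θ t)
    (L : Θ → ℕ → ℝ)
    (hL : ∀ θ t, L θ t = ∑ s ∈ Finset.range t, dist (m θ s) (z s) ^ 2)
    (hLmeas : ∀ t, Measurable fun θ => L θ t)
    (post : ℕ → Measure Θ)
    (hpost : ∀ t, post t =
      ((prior.withDensity fun θ => ENNReal.ofReal (Real.exp (-β * L θ t)))
          Set.univ)⁻¹ •
        prior.withDensity fun θ => ENNReal.ofReal (Real.exp (-β * L θ t)))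
    (hP2 : ∀ t (x : M), Integrable (fun y => dist x y ^ 2)
      ((post t).map fun θ => m θ t))
    (mhat : ℕ → M)
    (hmhat : ∀ t, IsBarycenter ((post t).map fun θ => m θ t) (mhat t))
    (T : ℕ) (hT : 1 ≤ T)
    (q : Measure Θ) [IsProbabilityMeasure q] (hq : q ≪ prior)
    (hqInt : Integrable (fun θ => L θ T) q)
    (hqKL : Integrable (fun θ => Real.log ((q.rnDeriv prior θ).toReal)) q) :
    ∑ t ∈ Finset.range T, dist (mhat t) (z t) ^ 2 ≤
      (∫ θ, L θ T ∂q) + 2 * Metric.diam (Set.univ : Set M) ^ 2 * KLdiv q prior := by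
  set D := Metric.diam (Set.univ : Set M) with hDdef
  have hdist : ∀ x y : M, dist x y ≤ D := fun x y =>
    Metric.dist_le_diam_of_mem hbdd (Set.mem_univ x) (Set.mem_univ y)
  have hβ0 : 0 < β := by rw [hβ]; positivity
  have hexp : ∀ t, Integrable (fun θ => exp (-β * L θ t)) prior := by
    intro t
    have hm := hLmeas t
    refine Integrable.of_bound (by fun_prop) 1 (ae_of_all _ fun θ => ?_)
    rw [Real.norm_of_nonneg (Real.exp_pos _).le, Real.exp_le_one_iff]
    have : 0 ≤ L θ t := by
      rw [hL]; exact Finset.sum_nonneg fun s _ => by positivity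
    nlinarith
  have hpost' : ∀ t, post t = prior.tilted (fun θ => -β * L θ t) := fun t => by
    rw [hpost, tilted_eq_inv_smul_withDensity prior ((hLmeas t).const_mul _) (hexp t)]
  have hWpos : ∀ t, 0 < ∫ θ, exp (-β * L θ t) ∂prior := fun t => integral_exp_pos (hexp t)
  have hstep : ∀ t, ∫ θ, exp (-β * L θ (t + 1)) ∂prior ≤
      exp (-β * dist (mhat t) (z t) ^ 2) * ∫ θ, exp (-β * L θ t) ∂prior := by
    intro t
    have : IsProbabilityMeasure (post t) := by
      rw [hpost']; exact isProbabilityMeasure_tilted (hexp t)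
    have : IsProbabilityMeasure ((post t).map fun θ => m θ t) :=
      Measure.isProbabilityMeasure_map (hmeas t).aemeasurable
    have hJ := exp_sq_dist_jensen hNPC hdiam hdist _ (hmhat t) (z t)
    rw [← hβ, integral_map (hmeas t).aemeasurable
      (Measurable.aestronglyMeasurable (by fun_prop)), hpost', integral_exp_tilted,
      div_le_iff₀ (hWpos t)] at hJ
    refine le_trans (le_of_eq ?_) hJ
    congr 1
    ext θ
    simp only [Pi.add_apply, hL, Finset.sum_range_succ]
    ring_nf
  have hW : ∀ t, ∫ θ, exp (-β * L θ t) ∂prior ≤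
      exp (-β * ∑ s ∈ Finset.range t, dist (mhat s) (z s) ^ 2) := by
    intro t
    induction t with
    | zero => simp [hL]
    | succ t ih =>
      refine (hstep t).trans ?_
      rw [Finset.sum_range_succ, mul_add, add_comm, Real.exp_add]
      gcongr
  have hG := neg_log_integral_exp_le prior q hq (hqInt.const_mul (-β)) (hexp T) hqKL
  rw [integral_const_mul] at hG
  have hlog := (Real.log_le_iff_le_exp (hWpos T)).mpr (hW T)
  have hfin : β * ∑ t ∈ Finset.range T, dist (mhat t) (z t) ^ 2 ≤
      β * ((∫ θ, L θ T ∂q) + 2 * D ^ 2 * KLdiv q prior) := by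
    have e : β * (2 * D ^ 2) = 1 := by rw [hβ]; field_simp
    have e2 : β * ((∫ θ, L θ T ∂q) + 2 * D ^ 2 * KLdiv q prior)
        = β * (∫ θ, L θ T ∂q) + β * (2 * D ^ 2) * KLdiv q prior := by ring
    rw [e2, e]
    linarith
  exact le_of_mul_le_mul_left hfin hβ0
end
end
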